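/- Let K be a field of positive characteristic, n ≥ 1, and let Γ be a finitely generated subgroup of GL_n(K) all of whose elements are semi-simple (an anisotropic linear group). If there exist finitely many abelian subgroups A₁, …, A_k of Γ such that every element of Γ can be written as a product a₁⋯a_k with a_i ∈ A_i, then Γ is virtually abelian. -/

import Mathlib

open Matrix

/-- An element of `GL n K` is semi-simple if the corresponding linear endomorphism
of `K^n` is a semisimple endomorphism. -/
def IsSemisimpleElt {n : ℕ} {K : Type*} [Field K] (g : GL (Fin n) K) : Prop :=
  Module.End.IsSemisimple ((g : Matrix (Fin n) (Fin n) K).mulVecLin)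

/-- A group is virtually abelian if it has an abelian subgroup of finite index. -/
def IsVirtuallyAbelian (G : Type*) [Group G] : Prop :=
  ∃ H : Subgroup G, H.FiniteIndex ∧ ∀ x y : ↥H, x * y = y * x

/-!
A finitely generated subgroup of `GL n K` has its entries in a finitely generated `𝔽_p`-algebra `R`,
and `R` embeds into matrices over `𝔽_p⟦X⟧`. Without elements of order `p`, the abelian subgroups of
`Γ` embed into products of unit groups of finitely generated domains over `𝔽_p`, so they are
finitely generated. If `g` lies in the congruence subgroup `Γ(X)`, then `g ^ p ^ r` lies in
`Γ(X ^ p ^ r)`, so in each abelian subgroup the index of `Γ(X ^ p ^ r)` is at most polynomial in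
`p ^ r`. Bounded generation passes this bound on to the index in `Γ`: below level `p ^ r` the chain
`Γ(X ^ l)` has only `O(r)` jumps.

Over an algebraically closed ultrametric field, the powers `(ρ g - 1) ^ p ^ (N + m)` with `f ∣ m`
are combinations `∑ w ^ p ^ m • e w` with fixed matrices `e w` and scalars `w` of distinct norms. If
`g ^ p ^ N` and `h ^ p ^ N` do not commute, the commutators of `g ^ p ^ (N + f * a)` and
`h ^ p ^ (N + f * b)` thus lie at distance exactly `α ^ p ^ (f * a) * β ^ p ^ (f * b) * κ` from `1`
for `2 * b ≤ a` and large `b`, and the pairs `(a, b)` in a box of side proportional to `r` give a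
number of jumps quadratic in `r`. Hence the `p ^ N`-th powers commute in `Γ(X)`.

A torsion-free linear group `G` whose `Q`-th powers generate an abelian subgroup `N` is virtually
abelian: the centralizer of `N` has finite index, since `G` permutes the finitely many linear
characters of `N`, and it is abelian, since its `Q`-th powers are central and norms to the residue
fields of the center embed it into a commutative group.
-/

section Valuations

theorem exists_valuationSubring_mem_iff {K L : Type*} [Field K] [Field L] (φ : K →+* L)
    (A : ValuationSubring K) : ∃ B : ValuationSubring L, ∀ x, φ x ∈ B ↔ x ∈ A := by
  obtain ⟨B, hB, hloc⟩ := IsLocalRing.exists_factor_valuationRing (φ.comp A.subtype)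
  refine ⟨B, fun x ↦ ⟨fun hx ↦ ?_, fun hx ↦ hB ⟨x, hx⟩⟩⟩
  rcases A.mem_or_inv_mem x with hA | hA
  · exact hA
  rcases eq_or_ne x 0 with rfl | hx0
  · exact A.zero_mem
  have hunit : IsUnit (((φ.comp A.subtype).codRestrict B.toSubring hB) ⟨x⁻¹, hA⟩) :=
    IsUnit.of_mul_eq_one (⟨φ x, hx⟩ : B) (Subtype.ext (by simp [hx0]))
  obtain ⟨y, hy⟩ := (hloc.map_nonunit _ hunit).exists_right_inv
  have hxy : x⁻¹ * y = 1 := congrArg Subtype.val hy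
  rw [inv_mul_eq_iff_eq_mul₀ hx0, mul_one] at hxy
  exact hxy ▸ y.2

variable {Γ : Type*} [AddCommGroup Γ] [LinearOrder Γ] [IsOrderedAddMonoid Γ]

/-- The monomials `x ^ g` of the field of Hahn series, as a homomorphism from the group of
exponents. -/
noncomputable def hahnMonomial (Γ k : Type*) [AddCommGroup Γ] [LinearOrder Γ] [IsOrderedAddMonoid Γ]
    [Field k] : Multiplicative Γ →* HahnSeries Γ k where
  toFun g := HahnSeries.single g.toAdd 1
  map_one' := rfl
  map_mul' g h := by rw [toAdd_mul, HahnSeries.single_mul_single, one_mul]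

/-- The embedding of a polynomial ring in `d` variables into the field of Hahn series with
lexicographically ordered exponents in `ℤ ^ d` that inverts the variables: the lexicographic degree
of a polynomial becomes the opposite of the order of its image. -/
noncomputable def hahnEmbedding (d : ℕ) (k : Type*) [Field k] :
    MvPolynomial (Fin d) k →ₐ[k] HahnSeries (Lex (Fin d → ℤ)) k :=
  MvPolynomial.aeval fun i ↦ hahnMonomial _ k (.ofAdd (-toLex (Pi.single i 1)))

variable {d : ℕ} {k : Type*} [Field k]

theorem hahnEmbedding_monomial (s : Fin d →₀ ℕ) (a : k) :
    hahnEmbedding d k (MvPolynomial.monomial s a) =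
      HahnSeries.single (-toLex fun i ↦ (s i : ℤ)) a := by
  have hexp : ∑ i, s i • -toLex (Pi.single i 1) = -toLex fun i ↦ (s i : ℤ) := by
    refine (toLexAddEquiv (Fin d → ℤ)).symm.injective ?_
    rw [map_sum]
    ext j
    calc _ = -(s j : ℤ) := by simp [Pi.single_apply]
      _ = _ := rfl
  rw [hahnEmbedding, MvPolynomial.aeval_monomial, Finsupp.prod_fintype _ _ (by simp)]
  simp only [← map_pow, ← map_prod, ← ofAdd_nsmul, ← ofAdd_sum]
  rw [hexp]
  refine HahnSeries.single_mul_single.trans ?_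
  rw [zero_add, mul_one, toAdd_ofAdd]
  rfl

theorem coeff_hahnEmbedding (f : MvPolynomial (Fin d) k) (s : Fin d →₀ ℕ) :
    (hahnEmbedding d k f).coeff (-toLex fun i ↦ (s i : ℤ)) = f.coeff s := by
  induction f using MvPolynomial.induction_on' with
  | monomial t a =>
    rw [hahnEmbedding_monomial, MvPolynomial.coeff_monomial]
    split_ifs with h
    · rw [h, HahnSeries.coeff_single_same]
    · exact HahnSeries.coeff_single_of_ne fun he ↦ h (Finsupp.ext fun i ↦ by
        simpa using congrFun (toLex_inj.1 (neg_injective he)).symm i)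
  | add f g hf hg => rw [map_add, HahnSeries.coeff_add, hf, hg, MvPolynomial.coeff_add]

theorem hahnEmbedding_injective : Function.Injective (hahnEmbedding d k) := fun f g hfg ↦
  MvPolynomial.ext _ _ fun s ↦ by rw [← coeff_hahnEmbedding, hfg, coeff_hahnEmbedding]

theorem exists_eq_C_of_orderTop_hahnEmbedding_nonneg {f : MvPolynomial (Fin d) k}
    (hf : 0 ≤ (hahnEmbedding d k f).orderTop) : ∃ c, f = MvPolynomial.C c := by
  refine ⟨f.coeff 0, MvPolynomial.ext _ _ fun s ↦ ?_⟩
  rw [MvPolynomial.coeff_C]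
  split_ifs with hs
  · rw [hs]
  rw [← coeff_hahnEmbedding]
  have hpos : 0 < toLex fun i ↦ (s i : ℤ) := Pi.toLex_strictMono
    (lt_of_le_of_ne (fun i ↦ Int.natCast_nonneg _) fun h ↦ hs (Finsupp.ext fun i ↦ by
      exact_mod_cast congrFun h i))
  exact HahnSeries.le_orderTop_iff_forall.1 hf _ (WithTop.coe_lt_coe.2 (neg_neg_iff_pos.2 hpos))

theorem exists_fg_subgroup_valueGroup [AddGroup.FG Γ] {F : Type*} [Field F]
    (φ : HahnSeries Γ k →+* F) (V : ValuationSubring F)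
    (hV : ∀ x : HahnSeries Γ k, 0 ≤ x.orderTop → φ x ∈ V) :
    ∃ T : Subgroup V.ValueGroupˣ, T.FG ∧
      ∀ x ≠ 0, ∃ t ∈ T, (t : V.ValueGroup) = V.valuation (φ x) := by
  let χ : Multiplicative Γ →* V.ValueGroup :=
    (V.valuation.comap φ : HahnSeries Γ k →* V.ValueGroup).comp (hahnMonomial Γ k)
  refine ⟨χ.toHomUnits.range, (Group.fg_iff_subgroup_fg _).1 (Group.fg_range _), fun x hx ↦
    ⟨_, ⟨.ofAdd x.order, rfl⟩, ?_⟩⟩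
  let y := hahnMonomial Γ k (.ofAdd x.order)
  have hy0 : y ≠ 0 := HahnSeries.single_ne_zero one_ne_zero
  let v := AddValuation.toValuation (HahnSeries.addVal Γ k)
  have hxy : v x = v y := congrArg (fun g ↦ Multiplicative.ofAdd (OrderDual.toDual g))
    ((HahnSeries.addVal_apply_of_ne hx).trans (HahnSeries.orderTop_single one_ne_zero).symm)
  have hle {a b : HahnSeries Γ k} (hb : b ≠ 0) (hab : v a = v b) :
      V.valuation (φ a) ≤ V.valuation (φ b) := by
    have hdiv : v (a / b) ≤ 1 := by rw [map_div₀, hab, div_self ((v.ne_zero_iff).2 hb)]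
    rw [← div_le_one₀ (by simpa [zero_lt_iff] using hb), ← map_div₀, ← map_div₀,
      V.valuation_le_one_iff]
    exact hV _ hdiv
  exact le_antisymm (hle hx hxy.symm) (hle hy0 hxy)

end Valuations

section Units

theorem exists_lt_map_eq_of_sum_eq_zero {ι F Γ₀ : Type*} [LinearOrder ι] [Ring F]
    [LinearOrderedCommGroupWithZero Γ₀] (v : Valuation F Γ₀) {s : Finset ι} {f : ι → F}
    (hsum : ∑ i ∈ s, f i = 0) (hne : ∃ i ∈ s, v (f i) ≠ 0) :
    ∃ i ∈ s, ∃ j ∈ s, i < j ∧ v (f i) ≠ 0 ∧ v (f i) = v (f j) := by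
  classical
  obtain ⟨i₀, hi₀, hne⟩ := hne
  obtain ⟨i, hi, hmax⟩ := s.exists_max_image (v ∘ f) ⟨i₀, hi₀⟩
  have hi0 : v (f i) ≠ 0 := (lt_of_lt_of_le (zero_lt_iff.2 hne) (hmax i₀ hi₀)).ne'
  obtain ⟨j, hj, hji, heq⟩ : ∃ j ∈ s, j ≠ i ∧ v (f j) = v (f i) := by
    by_contra! hlt
    have hrest : v (∑ j ∈ s.erase i, f j) < v (f i) := v.map_sum_lt hi0 fun j hj ↦
      (hmax j (Finset.mem_of_mem_erase hj)).lt_of_ne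
        (hlt j (Finset.mem_of_mem_erase hj) (Finset.ne_of_mem_erase hj))
    rw [← Finset.add_sum_erase s f hi] at hsum
    rw [← neg_eq_of_add_eq_zero_right hsum, v.map_neg] at hrest
    exact lt_irrefl _ hrest
  rcases hji.lt_or_gt with h | h
  · exact ⟨j, hj, i, hi, h, heq ▸ hi0, heq⟩
  · exact ⟨i, hi, j, hj, h, hi0, heq.symm⟩

theorem map_pow_factorial_mem_of_root {P F Γ₀ : Type*} [CommRing P] [Field F]
    [LinearOrderedCommGroupWithZero Γ₀] (φ : P →+* F) (v : Valuation F Γ₀) (T : Subgroup Γ₀ˣ)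
    (hT : ∀ c, φ c ≠ 0 → ∃ t ∈ T, (t : Γ₀) = v (φ c)) {q : Polynomial P} (hq : q.Monic) {x : F}
    (hx0 : x ≠ 0) (hx : q.eval₂ φ x = 0) {m : ℕ} (hm : q.natDegree ≤ m) :
    ∃ t ∈ T, (t : Γ₀) = v x ^ m.factorial := by
  rw [Polynomial.eval₂_eq_sum_range] at hx
  obtain ⟨i, -, j, hj, hij, hne, heq⟩ := exists_lt_map_eq_of_sum_eq_zero v hx
    ⟨q.natDegree, Finset.self_mem_range_succ _, by simp [hq.coeff_natDegree, hx0]⟩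
  have hcoeff {l : ℕ} (hl : v (φ (q.coeff l) * x ^ l) ≠ 0) : φ (q.coeff l) ≠ 0 :=
    left_ne_zero_of_mul (v.ne_zero_iff.1 hl)
  obtain ⟨a, ha, hai⟩ := hT _ (hcoeff hne)
  obtain ⟨b, hb, hbj⟩ := hT _ (hcoeff (heq ▸ hne))
  have hab : ((a / b : Γ₀ˣ) : Γ₀) = v x ^ (j - i) := by
    have hvx : v x ^ i ≠ 0 := pow_ne_zero _ (v.ne_zero_iff.2 hx0)
    rw [Units.val_div_eq_div_val, div_eq_iff b.ne_zero]
    refine mul_right_cancel₀ hvx ?_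
    rw [mul_right_comm, ← pow_add, Nat.sub_add_cancel hij.le, mul_comm _ (b : Γ₀), hai, hbj]
    simpa using heq
  obtain ⟨l, hl⟩ : j - i ∣ m.factorial := Nat.dvd_factorial (Nat.sub_pos_of_lt hij)
    (by rw [Finset.mem_range] at hj; omega)
  exact ⟨(a / b) ^ l, T.pow_mem (T.div_mem ha hb) l, by
    rw [Units.val_pow_eq_pow_val, hab, ← pow_mul, hl]⟩

theorem group_fg_of_finite_ker {ι A : Type*} {B : ι → Type*} [Finite ι] [CommGroup A]
    [∀ i, CommGroup (B i)] [hB : ∀ i, Group.FG (B i)] (f : ∀ i, A →* B i)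
    (hker : {a | ∀ i, f i a = 1}.Finite) : Group.FG A := by
  have hB' : ∀ i, Module.Finite ℤ (Additive (B i)) := fun i ↦
    Module.Finite.iff_addGroup_fg.2 (GroupFG.iff_add_fg.1 (hB i))
  let ψ : Additive A →ₗ[ℤ] ∀ i, Additive (B i) :=
    LinearMap.pi fun i ↦
      (MonoidHom.toAdditive (f i) : Additive A →+ Additive (B i)).toIntLinearMap
  have hfin : (LinearMap.ker ψ : Set (Additive A)).Finite :=
    hker.subset fun a ha i ↦ congrFun (show ψ a = 0 from ha) i
  have htop : (⊤ : Submodule ℤ (Additive A)).FG := by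
    refine Submodule.fg_of_fg_map_of_fg_inf_ker ψ (IsNoetherian.noetherian _) ⟨hfin.toFinset, ?_⟩
    rw [hfin.coe_toFinset, Submodule.span_eq, top_inf_eq]
  exact GroupFG.iff_add_fg.2 (Module.Finite.iff_addGroup_fg.1 ⟨htop⟩)

section FiniteExtension

variable {P S K L F : Type*} [CommRing P] [IsDomain P] [IsIntegrallyClosed P] [CommRing S]
  [Algebra P S] [Algebra.IsIntegral P S] [Field K] [Algebra P K] [IsFractionRing P K] [Field L]
  [Algebra K L] [FiniteDimensional K L] [Algebra P L] [IsScalarTower P K L] [Algebra S L]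
  [IsDomain S] [IsScalarTower P S L] [Field F] [IsAlgClosed F] [Algebra K F]

theorem minpoly_coeff_mem_of_forall_algHom_mem (V : ValuationSubring F) {x : S}
    (hx : ∀ σ : L →ₐ[K] F, σ (algebraMap S L x) ∈ V) (i : ℕ) :
    algebraMap K F (algebraMap P K ((minpoly P x).coeff i)) ∈ V := by
  have hint : IsIntegral P x := Algebra.IsIntegral.isIntegral x
  set q := minpoly K (algebraMap S L x) with hq
  have hmonic : q.Monic := minpoly.monic (Algebra.IsIntegral.isIntegral _)
  have hroots : ∀ a ∈ (q.map (algebraMap K F)).roots, a ∈ V.subtype.range := by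
    intro a ha
    have ha' : a ∈ q.rootSet F := by
      classical rwa [Polynomial.rootSet_def, Finset.mem_coe, Multiset.mem_toFinset]
    rw [hq, ← Algebra.IsAlgebraic.range_eval_eq_rootSet_minpoly] at ha'
    obtain ⟨σ, rfl⟩ := ha'
    exact ⟨⟨_, hx σ⟩, rfl⟩
  have hlift := (IsAlgClosed.splits (q.map (algebraMap K F))).mem_lift_of_roots_mem_range
    (hmonic.map _) V.subtype hroots
  obtain ⟨y, hy⟩ := (Polynomial.lifts_iff_coeff_lifts _).1 hlift i
  rw [Polynomial.coeff_map, hq, minpoly.isIntegrallyClosed_eq_field_fractions K L hint,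
    Polynomial.coeff_map] at hy
  exact hy ▸ y.2

variable (K L) in
theorem natDegree_minpoly_le_finrank (x : S) : (minpoly P x).natDegree ≤ Module.finrank K L := by
  have hint : IsIntegral P x := Algebra.IsIntegral.isIntegral x
  rw [← (minpoly.monic hint).natDegree_map (algebraMap P K),
    ← minpoly.isIntegrallyClosed_eq_field_fractions K L hint]
  exact minpoly.natDegree_le _

theorem finite_setOf_forall_algHom_mem (V : ValuationSubring F)
    (hV : {f : P | algebraMap K F (algebraMap P K f) ∈ V}.Finite) :
    {x : S | ∀ σ : L →ₐ[K] F, σ (algebraMap S L x) ∈ V}.Finite := by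
  classical
  refine (Polynomial.bUnion_roots_finite (algebraMap P S) (Module.finrank K L) hV).subset
    fun x hx ↦ ?_
  simp only [Set.mem_iUnion, exists_prop]
  refine ⟨minpoly P x, ⟨natDegree_minpoly_le_finrank K L x,
    minpoly_coeff_mem_of_forall_algHom_mem V hx⟩, ?_⟩
  have hmonic := (minpoly.monic (Algebra.IsIntegral.isIntegral (R := P) x)).map (algebraMap P S)
  rw [Finset.mem_coe, Multiset.mem_toFinset, Polynomial.mem_roots hmonic.ne_zero,
    Polynomial.IsRoot, Polynomial.eval_map]
  exact minpoly.aeval P x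

end FiniteExtension

attribute [local instance] FractionRing.liftAlgebra
attribute [local instance] FractionRing.isScalarTower_liftAlgebra

/- The valuations of the conjugates of a unit have bounded powers in `T`, and the units all of whose
conjugates have valuation `1` are roots of finitely many polynomials over `P`. -/
theorem fg_units_of_finite_setOf_mem {P S F : Type*} [CommRing P] [IsDomain P]
    [IsIntegrallyClosed P] [CommRing S] [IsDomain S] [Algebra P S] [FaithfulSMul P S]
    [Module.Finite P S] [Field F] [IsAlgClosed F] [Algebra P F] [FaithfulSMul P F]
    (V : ValuationSubring F) (hV : {f : P | algebraMap P F f ∈ V}.Finite)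
    {T : Subgroup V.ValueGroupˣ} (hTfg : T.FG)
    (hT : ∀ f : P, f ≠ 0 → ∃ t ∈ T, (t : V.ValueGroup) = V.valuation (algebraMap P F f)) :
    Group.FG Sˣ := by
  have hTfg' : Group.FG T := (Group.fg_iff_subgroup_fg T).2 hTfg
  let K := FractionRing P
  let L := FractionRing S
  let m := (Module.finrank K L).factorial
  let ψ (σ : L →ₐ[K] F) : S →ₐ[P] F :=
    (σ.restrictScalars P).comp (IsScalarTower.toAlgHom P S L)
  let χ (σ : L →ₐ[K] F) : Sˣ →* V.ValueGroupˣ :=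
    (Units.map (V.valuation : F →* V.ValueGroup)).comp (Units.map (ψ σ : S →* F))
  have hχ (σ) (u : Sˣ) : χ σ u ^ m ∈ T := by
    have hroot : (minpoly P (u : S)).eval₂ (algebraMap P F) (ψ σ u) = 0 := by
      rw [← Polynomial.aeval_def, Polynomial.aeval_algHom_apply, minpoly.aeval, map_zero]
    obtain ⟨t, ht, htx⟩ := map_pow_factorial_mem_of_root _ V.valuation T
      (fun f hf ↦ hT f fun h ↦ hf (by rw [h, map_zero]))
      (minpoly.monic (Algebra.IsIntegral.isIntegral _)) (u.isUnit.map (ψ σ)).ne_zero hroot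
      (natDegree_minpoly_le_finrank K L u.val)
    convert ht
    exact Units.ext htx.symm
  refine group_fg_of_finite_ker (fun σ ↦ ((powMonoidHom m).comp (χ σ)).codRestrict T (hχ σ)) ?_
  have hfin : {x : S | ∀ σ : L →ₐ[K] F, σ (algebraMap S L x) ∈ V}.Finite :=
    finite_setOf_forall_algHom_mem (P := P) V
      (by simpa only [← IsScalarTower.algebraMap_apply] using hV)
  refine (hfin.preimage Units.val_injective.injOn).subset fun u hu σ ↦ ?_
  have hpow : V.valuation (ψ σ u) ^ m = 1 :=
    congrArg (fun t : T ↦ ((t : V.ValueGroupˣ) : V.ValueGroup)) (hu σ)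
  exact (V.valuation_le_one_iff _).1 ((pow_le_one_iff (Nat.factorial_ne_zero _)).1 hpow.le)

theorem fg_units_of_finiteType {k S : Type*} [Field k] [Finite k] [CommRing S] [IsDomain S]
    [Algebra k S] [Algebra.FiniteType k S] : Group.FG Sˣ := by
  obtain ⟨d, g, hinj, hfin⟩ := exists_finite_inj_algHom_of_fg k S
  let P := MvPolynomial (Fin d) k
  let _ : Algebra P S := g.toRingHom.toAlgebra
  have _ : Module.Finite P S := hfin
  have _ : FaithfulSMul P S := (faithfulSMul_iff_algebraMap_injective _ _).2 hinj
  let H := HahnSeries (Lex (Fin d → ℤ)) k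
  have _ : AddGroup.FG (Lex (Fin d → ℤ)) :=
    Module.Finite.iff_addGroup_fg.1 (.equiv (toLexLinearEquiv ℤ (Fin d → ℤ)))
  let F := AlgebraicClosure H
  let _ : Algebra P F := ((algebraMap H F).comp (hahnEmbedding d k).toRingHom).toAlgebra
  have _ : FaithfulSMul P F := (faithfulSMul_iff_algebraMap_injective _ _).2
    ((algebraMap H F).injective.comp hahnEmbedding_injective)
  obtain ⟨V, hV⟩ := exists_valuationSubring_mem_iff (algebraMap H F)
    (AddValuation.toValuation (HahnSeries.addVal (Lex (Fin d → ℤ)) k)).valuationSubring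
  obtain ⟨T, hTfg, hT⟩ := exists_fg_subgroup_valueGroup (algebraMap H F) V fun x hx ↦ (hV x).2 hx
  refine fg_units_of_finite_setOf_mem V ((Set.finite_range MvPolynomial.C).subset fun f hf ↦ ?_)
    hTfg fun f hf ↦ hT _ ((map_ne_zero_iff _ hahnEmbedding_injective).2 hf)
  obtain ⟨c, rfl⟩ := exists_eq_C_of_orderTop_hahnEmbedding_nonneg ((hV _).1 hf)
  exact ⟨c, rfl⟩

end Units

section AbelianSubgroups

open scoped IsMulCommutative

variable {p : ℕ} [Fact p.Prime] {k : Type*} [Field k] [CharP k p]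

variable (k) in
theorem eq_one_of_isNilpotent_sub_one {G E : Type*} [Group G] [Ring E] [Algebra k E] {σ : G →* E}
    (hσ : Function.Injective σ) (hp : ∀ g : G, g ^ p = 1 → g = 1) {g : G}
    (hg : IsNilpotent (σ g - 1)) : g = 1 := by
  rcases subsingleton_or_nontrivial E with _ | _
  · exact hσ (Subsingleton.elim _ _)
  have hchar : CharP E p := charP_of_injective_algebraMap (algebraMap k E).injective p
  obtain ⟨m, hm⟩ := hg
  have hpow : g ^ p ^ m = 1 := hσ <| by
    have h := sub_pow_char_pow_of_commute p m (Commute.one_right (σ g))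
    rw [pow_eq_zero_of_le (Nat.lt_pow_self (Fact.out : p.Prime).one_lt).le hm, one_pow] at h
    rw [map_pow, map_one, ← sub_eq_zero, h]
  clear hm
  induction m with
  | zero => simpa using hpow
  | succ m ih => exact ih (hp _ (by rw [← pow_mul, ← pow_succ, hpow]))

variable (k) in
theorem eq_one_of_forall_minimalPrimes {G T : Type*} [Group G] [CommRing T] [Algebra k T]
    {τ : G →* T} (hτ : Function.Injective τ) (hp : ∀ g : G, g ^ p = 1 → g = 1) {g : G}
    (hg : ∀ 𝔭 ∈ minimalPrimes T, Ideal.Quotient.mk 𝔭 (τ g) = 1) : g = 1 := by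
  refine eq_one_of_isNilpotent_sub_one k hτ hp ?_
  rw [← mem_nilradical, nilradical, ← Ideal.sInf_minimalPrimes, Submodule.mem_sInf]
  exact fun 𝔭 h𝔭 ↦ Ideal.Quotient.eq.1 (hg 𝔭 h𝔭)

variable (k) in
theorem fg_of_injective_of_finiteType [Finite k] {A T : Type*} [CommGroup A] [CommRing T]
    [Algebra k T] [Algebra.FiniteType k T] {τ : A →* T} (hτ : Function.Injective τ)
    (hp : ∀ a : A, a ^ p = 1 → a = 1) : Group.FG A := by
  have _ : IsNoetherianRing T := Algebra.FiniteType.isNoetherianRing k T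
  have _ : Finite (minimalPrimes T) := minimalPrimes.finite_of_isNoetherianRing T
  have _ (𝔭 : minimalPrimes T) : 𝔭.1.IsPrime := 𝔭.2.1.1
  have _ (𝔭 : minimalPrimes T) : Group.FG (T ⧸ 𝔭.1)ˣ := fg_units_of_finiteType (k := k)
  refine group_fg_of_finite_ker (B := fun 𝔭 : minimalPrimes T ↦ (T ⧸ 𝔭.1)ˣ)
    (fun 𝔭 ↦ (((Ideal.Quotient.mk 𝔭.1 : T →* T ⧸ 𝔭.1).comp τ).toHomUnits)) ?_
  refine (Set.finite_singleton 1).subset fun a ha ↦ eq_one_of_forall_minimalPrimes k hτ hp ?_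
  exact fun 𝔭 h𝔭 ↦ congrArg Units.val (ha ⟨𝔭, h𝔭⟩)

theorem exists_finite_commRing_factorization {A R E : Type*} [CommGroup A] [CommRing R] [Ring E]
    [Algebra R E] [IsNoetherian R E] (σ : A →* E) :
    ∃ (T : Subalgebra R E) (_ : IsMulCommutative T) (τ : A →* T), Module.Finite R T ∧
      ∀ a, (τ a : E) = σ a := by
  let T := Algebra.adjoin R (Set.range σ)
  have hcomm : IsMulCommutative T := Algebra.isMulCommutative_adjoin R (by
    rintro _ ⟨a, rfl⟩ _ ⟨b, rfl⟩
    rw [← map_mul, mul_comm, map_mul])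
  exact ⟨T, hcomm, σ.codRestrict T fun a ↦ Algebra.subset_adjoin ⟨a, rfl⟩,
    inferInstanceAs (Module.Finite R (Subalgebra.toSubmodule T)), fun _ ↦ rfl⟩

variable (k) in
theorem fg_of_injective_of_isNoetherian [Finite k] {A R E : Type*} [CommGroup A] [CommRing R]
    [Algebra k R] [Algebra.FiniteType k R] [Ring E] [Algebra R E] [IsNoetherian R E]
    {σ : A →* E} (hσ : Function.Injective σ) (hp : ∀ a : A, a ^ p = 1 → a = 1) : Group.FG A := by
  obtain ⟨T, hcomm, τ, hfin, hτ⟩ := exists_finite_commRing_factorization (R := R) σ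
  let _ : Algebra k T := .compHom T (algebraMap k R)
  have _ : IsScalarTower k R T := .of_algebraMap_eq' rfl
  have _ : Algebra.FiniteType k T := .trans ‹Algebra.FiniteType k R› inferInstance
  have hτ_inj : Function.Injective τ := fun a b hab ↦ hσ <| by
    rw [← hτ a, ← hτ b, hab]
  exact fg_of_injective_of_finiteType k hτ_inj hp

end AbelianSubgroups

section Embedding

theorem uncountable_powerSeries (k : Type*) [Semiring k] [Nontrivial k] :
    Uncountable (PowerSeries k) := by
  classical
  rw [← not_countable_iff]
  intro _
  obtain ⟨e, he⟩ := exists_injective_nat (PowerSeries k)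
  refine Function.cantor_injective (fun s : Set ℕ ↦ e (.mk fun n ↦ if n ∈ s then 1 else 0))
    fun s t hst ↦ Set.ext fun n ↦ ?_
  have hn := congrArg (PowerSeries.coeff n) (he hst)
  by_cases hs : n ∈ s <;> by_cases ht : n ∈ t <;> simp_all

theorem exists_injective_algHom_powerSeries (d : ℕ) (k : Type*) [Field k] [Countable k] :
    ∃ φ : MvPolynomial (Fin d) k →ₐ[k] PowerSeries k, Function.Injective φ := by
  obtain ⟨s, hs⟩ := exists_isTranscendenceBasis k (PowerSeries k)
  have hinf : Infinite s := by
    by_contra hfin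
    rw [not_infinite_iff_finite] at hfin
    have _ := hs.isAlgebraic
    have _ : Countable (Algebra.adjoin k (Set.range ((↑) : s → PowerSeries k))) :=
      Cardinal.mk_le_aleph0_iff.1 <| (Algebra.cardinalMk_adjoin_le k _).trans <|
        max_le (max_le Cardinal.mk_le_aleph0 Cardinal.mk_le_aleph0) le_rfl
    refine not_countable_iff.2 (uncountable_powerSeries k) (Set.countable_univ_iff.1 ?_)
    exact (Algebraic.countable _ _).mono fun x _ ↦ hs.isAlgebraic.isAlgebraic x
  let e : Fin d ↪ s := Fin.valEmbedding.trans (Infinite.natEmbedding s)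
  exact ⟨_, hs.1.comp e e.injective⟩

theorem exists_injective_ringHom_matrix {P R O : Type*} [CommRing P] [IsDomain P] [CommRing R]
    [IsDomain R] [Algebra P R] [FaithfulSMul P R] [Module.Finite P R] [CommRing O] [IsDomain O]
    [IsPrincipalIdealRing O] [Algebra P O] [FaithfulSMul P O] :
    ∃ (m : ℕ) (ψ : R →+* Matrix (Fin m) (Fin m) O), Function.Injective ψ := by
  let E := AlgebraicClosure (FractionRing O)
  have _ : FaithfulSMul O E := .trans O (FractionRing O) E
  have _ : FaithfulSMul P E := .trans P O E
  let σ : R →ₐ[P] E := IsAlgClosed.lift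
  have hσ : Function.Injective σ := (RingHom.injective_iff_ker_eq_bot σ.toRingHom).2 <|
    Ideal.eq_bot_of_comap_eq_bot (R := P) <| by
      rw [RingHom.comap_ker, ← RingHom.injective_iff_ker_eq_bot, AlgHom.toRingHom_eq_coe,
        AlgHom.comp_algebraMap]
      exact FaithfulSMul.algebraMap_injective P E
  obtain ⟨s, hs⟩ := Module.Finite.fg_top (R := P) (M := R)
  let O' := Algebra.adjoin O (σ '' s)
  have hO' (x : R) : σ x ∈ O' := by
    have hx : x ∈ Submodule.span P (s : Set R) := hs ▸ Submodule.mem_top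
    have hle : Submodule.span P (s : Set R) ≤
        (O'.restrictScalars P).toSubmodule.comap σ.toLinearMap :=
      Submodule.span_le.2 fun y hy ↦ Algebra.subset_adjoin ⟨y, hy, rfl⟩
    exact hle hx
  have _ : Module.Finite O O' := Module.Finite.iff_fg.2 <|
    fg_adjoin_of_finite (s.finite_toSet.image σ) (by
      rintro _ ⟨x, -, rfl⟩
      exact ((Algebra.IsIntegral.isIntegral (R := P) x).map σ).tower_top)
  have _ : Module.IsTorsionFree O O' := inferInstance
  let b := Module.finBasis O O'
  exact ⟨_, (Algebra.leftMulMatrix b).toRingHom.comp (σ.toRingHom.codRestrict O' hO'),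
    (Algebra.leftMulMatrix_injective b).comp fun x y hxy ↦ hσ (congrArg Subtype.val hxy)⟩

theorem exists_injective_ringHom_matrix_powerSeries (k : Type*) {R : Type*} [Field k] [Countable k]
    [CommRing R] [IsDomain R] [Algebra k R] [Algebra.FiniteType k R] :
    ∃ (m : ℕ) (ψ : R →+* Matrix (Fin m) (Fin m) (PowerSeries k)), Function.Injective ψ := by
  obtain ⟨d, g, hinj, hfin⟩ := exists_finite_inj_algHom_of_fg k R
  obtain ⟨φ, hφ⟩ := exists_injective_algHom_powerSeries d k
  let P := MvPolynomial (Fin d) k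
  let _ : Algebra P R := g.toRingHom.toAlgebra
  have _ : Module.Finite P R := hfin
  have _ : FaithfulSMul P R := (faithfulSMul_iff_algebraMap_injective _ _).2 hinj
  let _ : Algebra P (PowerSeries k) := φ.toRingHom.toAlgebra
  have _ : FaithfulSMul P (PowerSeries k) := (faithfulSMul_iff_algebraMap_injective _ _).2 hφ
  exact exists_injective_ringHom_matrix (P := P)

theorem exists_fg_subalgebra_map_eq (k : Type*) {K G n : Type*} [CommRing k] [CommRing K]
    [Algebra k K] [Group G] [Group.FG G] [Fintype n] [DecidableEq n] (σ : G →* Matrix n n K) :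
    ∃ (R : Subalgebra k K) (τ : G →* Matrix n n R), R.FG ∧ ∀ g, R.val.mapMatrix (τ g) = σ g := by
  classical
  obtain ⟨s, hs⟩ := Monoid.FG.fg_top (M := G)
  let R := Algebra.adjoin k ((fun x : G × n × n ↦ σ x.1 x.2.1 x.2.2) '' (s ×ˢ Set.univ))
  have hR (g : G) : ∀ i j, σ g i j ∈ R := by
    have hle : Submonoid.closure (s : Set G) ≤ R.matrix.toSubmonoid.comap σ :=
      Submonoid.closure_le.2 fun g hg i j ↦ Algebra.subset_adjoin ⟨(g, i, j), by simpa, rfl⟩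
    exact hle (hs ▸ Submonoid.mem_top g)
  have hval : Function.Injective (R.val.mapMatrix : Matrix n n R → Matrix n n K) :=
    Matrix.map_injective Subtype.val_injective
  have hfin : ((fun x : G × n × n ↦ σ x.1 x.2.1 x.2.2) '' (s ×ˢ Set.univ)).Finite :=
    (s.finite_toSet.prod Set.finite_univ).image _
  let τ (g : G) : Matrix n n R := .of fun i j ↦ ⟨σ g i j, hR g i j⟩
  have hτ (g : G) : R.val.mapMatrix (τ g) = σ g := rfl
  refine ⟨R, ⟨⟨τ, hval ?_⟩, fun g h ↦ hval ?_⟩, Subalgebra.fg_def.2 ⟨_, hfin, rfl⟩, hτ⟩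
  · rw [hτ, map_one, map_one]
  · rw [hτ, map_mul, map_mul, hτ, hτ]

theorem exists_injective_monoidHom_GL_powerSeries (k : Type*) {G R n : Type*} [Field k]
    [Countable k] [Group G] [CommRing R] [IsDomain R] [Algebra k R] [Algebra.FiniteType k R]
    [Fintype n] [DecidableEq n] {τ : G →* Matrix n n R} (hτ : Function.Injective τ) :
    ∃ (m : ℕ) (ρ : G →* GL (n × Fin m) (PowerSeries k)), Function.Injective ρ := by
  obtain ⟨m, ψ, hψ⟩ := exists_injective_ringHom_matrix_powerSeries k (R := R)
  let Ψ := (Matrix.compRingEquiv n (Fin m) (PowerSeries k)).toRingHom.comp ψ.mapMatrix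
  have hΨ : Function.Injective Ψ :=
    (Matrix.compRingEquiv n (Fin m) (PowerSeries k)).injective.comp (Matrix.map_injective hψ)
  let σ : G →* Matrix (n × Fin m) (n × Fin m) (PowerSeries k) := Ψ.toMonoidHom.comp τ
  exact ⟨m, σ.toHomUnits, fun g h hgh ↦ hτ (hΨ (congrArg Units.val hgh))⟩

end Embedding

section BoundedGeneration

theorem index_le_pow_rank {A : Type*} [CommGroup A] [Group.FG A] (H : Subgroup A) {m : ℕ}
    (hm : 0 < m) (hH : ∀ a : A, a ^ m ∈ H) : H.index ≤ m ^ Group.rank A := by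
  have hdvd : Nat.card (A ⧸ H) ∣ m ^ Group.rank (A ⧸ H) := card_dvd_exponent_pow_rank' _ fun x ↦ by
    obtain ⟨a, rfl⟩ := QuotientGroup.mk_surjective x
    exact (QuotientGroup.eq_one_iff _).2 (hH a)
  calc H.index ≤ m ^ Group.rank (A ⧸ H) := Nat.le_of_dvd (by positivity) hdvd
    _ ≤ m ^ Group.rank A := Nat.pow_le_pow_right hm <|
        Group.rank_le_of_surjective _ (QuotientGroup.mk'_surjective H)

variable {G : Type*} [Group G] {l : ℕ} {A : Fin l → Subgroup G}

theorem index_le_prod_relIndex (hA : ∀ x : G, ∃ a : Fin l → G, (∀ i, a i ∈ A i) ∧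
      x = (List.ofFn a).prod) (H : Subgroup G) [H.Normal] [H.FiniteIndex] :
    H.index ≤ ∏ i, H.relIndex (A i) := by
  let φ (i : Fin l) : A i ⧸ H.subgroupOf (A i) → G ⧸ H :=
    QuotientGroup.map _ H (A i).subtype le_rfl
  have hsurj : Function.Surjective fun x : ∀ i, A i ⧸ H.subgroupOf (A i) ↦
      (List.ofFn fun i ↦ φ i (x i)).prod := fun x ↦ by
    obtain ⟨g, rfl⟩ := QuotientGroup.mk'_surjective H x
    obtain ⟨a, ha, rfl⟩ := hA g
    refine ⟨fun i ↦ (⟨a i, ha i⟩ : A i), ?_⟩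
    rw [map_list_prod, List.map_ofFn]
    rfl
  calc H.index ≤ Nat.card (∀ i, A i ⧸ H.subgroupOf (A i)) := Nat.card_le_card_of_surjective _ hsurj
    _ = ∏ i, H.relIndex (A i) := Nat.card_pi

end BoundedGeneration

section CongruenceSubgroup

open scoped commutatorElement

variable {G n O : Type*} [Group G] [Fintype n] [DecidableEq n] [CommRing O]

section Matrix

variable {I J : Ideal O} {M N : Matrix n n O}

theorem mapMatrix_mk_eq_mapMatrix_mk_iff :
    (Ideal.Quotient.mk I).mapMatrix M = (Ideal.Quotient.mk I).mapMatrix N ↔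
      M - N ∈ I.matrix n := by
  simp only [← Matrix.ext_iff, RingHom.mapMatrix_apply, Matrix.map_apply, Ideal.mem_matrix,
    Matrix.sub_apply, Ideal.Quotient.eq]

theorem mul_mem_matrix (hM : M ∈ I.matrix n) (hN : N ∈ J.matrix n) :
    M * N ∈ (I * J).matrix n := fun i j ↦ by
  rw [Matrix.mul_apply]
  exact Submodule.sum_mem _ fun l _ ↦ Ideal.mul_mem_mul (hM i l) (hN l j)

theorem pow_mem_matrix (hM : M ∈ I.matrix n) (m : ℕ) :
    M ^ m ∈ (I ^ m).matrix n := by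
  induction m with
  | zero => simp
  | succ m ih => exact pow_succ M m ▸ pow_succ I m ▸ mul_mem_matrix ih hM

end Matrix

/-- The congruence subgroup of level `I` of a group `G` represented by matrices over `O`: the
elements that act as the identity modulo the ideal `I`. -/
def congruenceSubgroup (ρ : G →* GL n O) (I : Ideal O) : Subgroup G :=
  ((GeneralLinearGroup.map (Ideal.Quotient.mk I)).comp ρ).ker

namespace congruenceSubgroup

variable {ρ : G →* GL n O} {I J : Ideal O} {g h : G}

instance : (congruenceSubgroup ρ I).Normal := MonoidHom.normal_ker _

instance [Finite (O ⧸ I)] : (congruenceSubgroup ρ I).FiniteIndex := Subgroup.finiteIndex_ker _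

theorem mem_iff_map_eq_one : g ∈ congruenceSubgroup ρ I ↔
    (Ideal.Quotient.mk I).mapMatrix (ρ g : Matrix n n O) = 1 :=
  Units.ext_iff

theorem mem_iff : g ∈ congruenceSubgroup ρ I ↔ (ρ g - 1 : Matrix n n O) ∈ I.matrix n := by
  rw [mem_iff_map_eq_one, ← mapMatrix_mk_eq_mapMatrix_mk_iff, map_one]

theorem mono (hIJ : I ≤ J) : congruenceSubgroup ρ I ≤ congruenceSubgroup ρ J := fun _ hg ↦
  mem_iff.2 (Ideal.matrix_monotone n hIJ (mem_iff.1 hg))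

variable {p : ℕ} [Fact p.Prime] [CharP O p]

variable (ρ g) in
theorem coe_pow_sub_one (r : ℕ) :
    (ρ (g ^ p ^ r) - 1 : Matrix n n O) = (ρ g - 1 : Matrix n n O) ^ p ^ r := by
  cases isEmpty_or_nonempty n
  · exact Subsingleton.elim _ _
  · rw [sub_pow_char_pow_of_commute p r (Commute.one_right _), one_pow, map_pow,
      Units.val_pow_eq_pow_val]

theorem commutator_pow_pow_mem_iff (r s : ℕ) : ⁅g ^ p ^ r, h ^ p ^ s⁆ ∈ congruenceSubgroup ρ I ↔
    ((ρ g - 1) ^ p ^ r * (ρ h - 1) ^ p ^ s - (ρ h - 1) ^ p ^ s * (ρ g - 1) ^ p ^ r :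
      Matrix n n O) ∈ I.matrix n := by
  have hcomm (a b : Matrix n n O) : (a - 1) * (b - 1) - (b - 1) * (a - 1) = a * b - b * a := by
    noncomm_ring
  rw [← coe_pow_sub_one, ← coe_pow_sub_one, hcomm, ← mapMatrix_mk_eq_mapMatrix_mk_iff,
    congruenceSubgroup, MonoidHom.mem_ker, map_commutatorElement,
    commutatorElement_eq_one_iff_mul_comm, ← map_mul, ← map_mul, Units.ext_iff]
  simp only [MonoidHom.comp_apply, map_mul]
  rfl

theorem commute_pow_pow_iff (hρ : Function.Injective ρ) (r s : ℕ) :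
    Commute (g ^ p ^ r) (h ^ p ^ s) ↔
      Commute ((ρ g - 1 : Matrix n n O) ^ p ^ r) ((ρ h - 1 : Matrix n n O) ^ p ^ s) := by
  have hker : congruenceSubgroup ρ (⊥ : Ideal O) = ⊥ := eq_bot_iff.2 fun x hx ↦ by
    rw [mem_iff, Ideal.matrix_bot, Ideal.mem_bot, sub_eq_zero, Units.val_eq_one] at hx
    exact (map_eq_one_iff ρ hρ).1 hx
  rw [← commutatorElement_eq_one_iff_commute, ← Subgroup.mem_bot, ← hker,
    commutator_pow_pow_mem_iff, Ideal.matrix_bot, Ideal.mem_bot, sub_eq_zero, Commute, SemiconjBy]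

theorem pow_mem (hg : g ∈ congruenceSubgroup ρ I) (r : ℕ) :
    g ^ p ^ r ∈ congruenceSubgroup ρ (I ^ p ^ r) :=
  mem_iff.2 (coe_pow_sub_one ρ g r ▸ pow_mem_matrix (mem_iff.1 hg) _)

variable (ρ) in
theorem exists_index_pow_le {l : ℕ} {A : Fin l → Subgroup G} (hI : I.FG) [Finite (O ⧸ I)]
    (hA : ∀ x : G, ∃ a : Fin l → G, (∀ i, a i ∈ A i) ∧ x = (List.ofFn a).prod)
    [∀ i, IsMulCommutative (A i)] [∀ i, Group.FG (A i)] :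
    ∃ B, ∀ r, (congruenceSubgroup ρ (I ^ p ^ r)).index ≤ B ^ (r + 1) := by
  open scoped IsMulCommutative in
  have hp : 0 < p := (Fact.out : p.Prime).pos
  let M := (congruenceSubgroup ρ I).index
  have hM : 0 < M := Nat.pos_of_ne_zero Subgroup.FiniteIndex.index_ne_zero
  let D := ∑ i, Group.rank (A i)
  refine ⟨(M * p) ^ D, fun r ↦ ?_⟩
  have _ : Finite (O ⧸ I ^ p ^ r) := Ideal.finite_quotient_pow hI _
  have hpow (g : G) : g ^ (M * p ^ r) ∈ congruenceSubgroup ρ (I ^ p ^ r) :=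
    pow_mul g M _ ▸ pow_mem (Subgroup.pow_index_mem _ g) r
  calc (congruenceSubgroup ρ (I ^ p ^ r)).index
      ≤ ∏ i, (congruenceSubgroup ρ (I ^ p ^ r)).relIndex (A i) := index_le_prod_relIndex hA _
    _ ≤ ∏ i, (M * p ^ r) ^ Group.rank (A i) := Finset.prod_le_prod' fun i _ ↦
        index_le_pow_rank ((congruenceSubgroup ρ (I ^ p ^ r)).subgroupOf (A i)) (by positivity)
          fun a ↦ hpow a
    _ = (M * p ^ r) ^ D := Finset.prod_pow_eq_pow_sum _ _ _
    _ ≤ ((M * p) ^ (r + 1)) ^ D := by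
        gcongr
        rw [mul_pow]
        exact Nat.mul_le_mul (Nat.le_self_pow r.succ_ne_zero M) (Nat.pow_le_pow_right hp r.le_succ)
    _ = ((M * p) ^ D) ^ (r + 1) := pow_right_comm _ _ _

theorem eq_one_of_isOfFinOrder (hρ : Function.Injective ρ) (hp : ∀ g : G, g ^ p = 1 → g = 1)
    (hI : I ≤ Ideal.jacobson ⊥) (hg : g ∈ congruenceSubgroup ρ I) (hfin : IsOfFinOrder g) :
    g = 1 := by
  let _ : Algebra (ZMod p) O := ZMod.algebra O p
  have _ : Finite (Submonoid.powers g) := hfin.finite_powers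
  obtain ⟨a, b, hne, hab⟩ := Finite.exists_ne_map_eq_of_infinite
    fun j : ℕ ↦ (⟨g ^ p ^ j, _, rfl⟩ : Submonoid.powers g)
  wlog hlt : a < b generalizing a b
  · exact this b a hne.symm hab.symm (by lia)
  set x : Matrix n n O := ρ g - 1 with hx
  obtain ⟨s, hs⟩ := Nat.exists_eq_add_of_lt (Nat.pow_lt_pow_right (Fact.out : p.Prime).one_lt hlt)
  have hpow : x ^ p ^ a = x ^ s * x * x ^ p ^ a := by
    rw [← pow_succ, ← pow_add, add_comm, ← add_assoc, ← hs, hx, ← coe_pow_sub_one,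
      ← coe_pow_sub_one, show g ^ p ^ a = g ^ p ^ b from congrArg Subtype.val hab]
  have hjac : x ∈ (⊥ : Ideal (Matrix n n O)).jacobson :=
    Ideal.matrix_bot (R := O) n ▸
      Ideal.matrix_jacobson_le ⊥ (Ideal.matrix_monotone n hI (mem_iff.1 hg))
  obtain ⟨z, hz⟩ := Ideal.mem_jacobson_iff.1 hjac (-x ^ s)
  have hinv : z * (1 - x ^ s * x) = 1 :=
    calc z * (1 - x ^ s * x) = z * -x ^ s * x + z := by noncomm_ring
      _ = 1 := sub_eq_zero.1 hz
  refine eq_one_of_isNilpotent_sub_one (ZMod p) (σ := (Units.coeHom _).comp ρ)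
    (Units.val_injective.comp hρ) hp ⟨p ^ a, ?_⟩
  calc x ^ p ^ a = z * (1 - x ^ s * x) * x ^ p ^ a := by rw [hinv, one_mul]
    _ = 0 := by rw [mul_assoc, sub_mul, one_mul, ← hpow, sub_self, mul_zero]

end congruenceSubgroup

end CongruenceSubgroup

universe u

section ContractiveEmbedding

variable {k F : Type*} [Field k] [NormedField F] [Algebra k F]

/-- An embedding of `k⟦X⟧` in a valued field `F`, contracting the maximal ideal, such that the
residue field of `F` is algebraic over `k`. -/
structure IsContractiveEmbedding (ι : PowerSeries k →ₐ[k] F) : Prop where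
  norm_le_one : ∀ f, ‖ι f‖ ≤ 1
  norm_X_pos : 0 < ‖ι PowerSeries.X‖
  norm_X_lt_one : ‖ι PowerSeries.X‖ < 1
  exists_isIntegral_norm_sub_lt_one : ∀ x : F, ‖x‖ ≤ 1 → ∃ s, IsIntegral k s ∧ ‖x - s‖ < 1

section Residue

variable [IsUltrametricDist F] {ι : PowerSeries k →ₐ[k] F}

theorem norm_eval₂_sub_aeval_map_constantCoeff_le (hι : ∀ f, ‖ι f‖ ≤ 1) {x : F} (hx : ‖x‖ ≤ 1)
    (f : Polynomial (PowerSeries k)) :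
    ‖f.eval₂ ι x - Polynomial.aeval x (f.map PowerSeries.constantCoeff)‖ ≤ ‖ι PowerSeries.X‖ := by
  induction f using Polynomial.induction_on' with
  | add f g hf hg =>
    rw [Polynomial.eval₂_add, Polynomial.map_add, map_add, add_sub_add_comm]
    exact (IsUltrametricDist.norm_add_le_max _ _).trans (max_le hf hg)
  | monomial d a =>
    obtain ⟨b, hb⟩ : PowerSeries.X ∣ a - algebraMap k (PowerSeries k) (a.constantCoeff) := by
      simp [PowerSeries.X_dvd_iff]
    have key : ι a - algebraMap k F a.constantCoeff = ι PowerSeries.X * ι b := by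
      rw [← map_mul, ← hb, map_sub, AlgHom.commutes]
    rw [Polynomial.eval₂_monomial, Polynomial.map_monomial, Polynomial.aeval_monomial, ← sub_mul]
    calc ‖(ι a - algebraMap k F a.constantCoeff) * x ^ d‖
        = ‖ι PowerSeries.X‖ * (‖ι b‖ * ‖x‖ ^ d) := by
          rw [key, norm_mul, norm_mul, norm_pow, mul_assoc]
      _ ≤ ‖ι PowerSeries.X‖ := mul_le_of_le_one_right (norm_nonneg _)
          (mul_le_one₀ (hι b) (by positivity) (pow_le_one₀ (norm_nonneg x) hx))

theorem exists_isIntegral_norm_sub_lt_one [IsAlgClosed F] (hι : ∀ f, ‖ι f‖ ≤ 1)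
    (hX : ‖ι PowerSeries.X‖ < 1) {x : F} (hx : ‖x‖ ≤ 1) (hint : ι.toRingHom.IsIntegralElem x) :
    ∃ s, IsIntegral k s ∧ ‖x - s‖ < 1 := by
  obtain ⟨f, hf, hfx⟩ := hint
  set g := f.map PowerSeries.constantCoeff
  have hg : g.Monic := hf.map _
  have hgx : ‖Polynomial.aeval x g‖ < 1 := by
    have h := norm_eval₂_sub_aeval_map_constantCoeff_le hι hx f
    rw [show f.eval₂ ι x = 0 from hfx, zero_sub, norm_neg] at h
    exact h.trans_lt hX
  by_contra! hfar
  refine hgx.not_ge ?_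
  rw [Polynomial.aeval_def, ← Polynomial.eval_map,
    (IsAlgClosed.splits _).eval_eq_prod_roots_of_monic (hg.map (algebraMap k F))]
  refine Multiset.prod_induction (fun y : F ↦ 1 ≤ ‖y‖) _
    (fun a b ha hb ↦ (one_le_mul_of_one_le_of_one_le ha hb).trans_eq (norm_mul a b).symm)
    norm_one.ge ?_
  simp only [Multiset.mem_map, forall_exists_index, and_imp, forall_apply_eq_imp_iff₂]
  refine fun s hs ↦ hfar s ⟨g, hg, ?_⟩
  exact (Polynomial.eval_map _ _).symm.trans (Polynomial.isRoot_of_mem_roots hs)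

end Residue

theorem exists_complete_normedField_powerSeries_algHom (k : Type u) [Field k] :
    ∃ (E : Type u) (_ : NontriviallyNormedField E) (_ : Algebra k E) (ι : PowerSeries k →ₐ[k] E),
      CompleteSpace E ∧ IsUltrametricDist E ∧ (∀ x, ‖x‖ ≤ 1 ↔ x ∈ Set.range ι) ∧
      0 < ‖ι PowerSeries.X‖ ∧ ‖ι PowerSeries.X‖ < 1 := by
  let E := LaurentSeries k
  let v : Valuation E (WithZero (Multiplicative ℤ)) := Valued.v
  let ι : PowerSeries k →ₐ[k] E :=
    { algebraMap (PowerSeries k) E with commutes' := fun a ↦ by simp; rfl }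
  have hv : v (ι PowerSeries.X) = WithZero.exp (-1 : ℤ) := by
    rw [← pow_one (ι PowerSeries.X)]
    exact LaurentSeries.valuation_X_pow k 1
  have hv0 : v (ι PowerSeries.X) ≠ 0 := hv ▸ WithZero.exp_ne_zero
  have hv1 : v (ι PowerSeries.X) < 1 := hv ▸ by decide
  have : v.IsNontrivial := ⟨_, hv0, hv1.ne⟩
  have : MulArchimedean (MonoidWithZeroHom.ValueGroup₀ (.ofClass v)) :=
    .comap MonoidWithZeroHom.ValueGroup₀.embedding.toMonoidHom
      MonoidWithZeroHom.ValueGroup₀.embedding_strictMono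
  let _ : v.RankOne := (Valuation.nonempty_rankOne_iff_mulArchimedean.2 inferInstance).some
  let nf : NormedField E := Valued.toNormedField E (WithZero (Multiplicative ℤ))
  have hlt : ‖ι PowerSeries.X‖ < 1 := Valued.toNormedField.norm_lt_one_iff.2 hv1
  have hpos : 0 < ‖ι PowerSeries.X‖ := norm_pos_iff.2 fun h ↦ hv0 (by rw [h, map_zero])
  exact ⟨E, { nf with non_trivial := ⟨(ι PowerSeries.X)⁻¹, by
      rw [norm_inv]; exact (one_lt_inv₀ hpos).2 hlt⟩ }, inferInstance, ι,
    LaurentSeries.instLaurentSeriesComplete, inferInstance,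
    fun x ↦ Valued.toNormedField.norm_le_one_iff.trans (LaurentSeries.val_le_one_iff_eq_coe k x),
    hpos, hlt⟩

theorem exists_isContractiveEmbedding (k : Type u) [Field k] :
    ∃ (F : Type u) (_ : NormedField F) (_ : IsUltrametricDist F) (_ : IsAlgClosed F)
      (_ : Algebra k F) (ι : PowerSeries k →ₐ[k] F), IsContractiveEmbedding ι := by
  obtain ⟨E, _, _, ι, _, _, hle, hpos, hlt⟩ := exists_complete_normedField_powerSeries_algHom k
  let F := AlgebraicClosure E
  let _ : NormedField F := spectralNorm.normedField E F
  have hext (x : E) : ‖algebraMap E F x‖ = ‖x‖ := spectralNorm_extends x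
  have hult : IsUltrametricDist F := IsUltrametricDist.isUltrametricDist_of_isNonarchimedean_norm
    (isNonarchimedean_spectralNorm (K := E) (L := F))
  let κ : PowerSeries k →ₐ[k] F := (IsScalarTower.toAlgHom k E F).comp ι
  have hκ (f : PowerSeries k) : ‖κ f‖ = ‖ι f‖ := hext _
  have hκ_le (f : PowerSeries k) : ‖κ f‖ ≤ 1 := (hκ f).trans_le ((hle _).2 ⟨f, rfl⟩)
  rw [← hκ] at hpos hlt
  refine ⟨F, _, hult, inferInstance, inferInstance, κ, hκ_le, hpos, hlt, fun x hx ↦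
    exists_isIntegral_norm_sub_lt_one hκ_le hlt hx ?_⟩
  have hint : IsIntegral E x := Algebra.IsIntegral.isIntegral x
  have hmonic := minpoly.monic hint
  have hlifts : minpoly E x ∈ Polynomial.lifts ι.toRingHom :=
    (Polynomial.lifts_iff_coeff_lifts _).2 fun d ↦
      (hle _).1 ((spectralValue_le_one_iff hmonic).1 hx d)
  obtain ⟨f, hf, -, hfmonic⟩ := Polynomial.lifts_and_natDegree_eq_and_monic hlifts hmonic
  refine ⟨f, hfmonic, ?_⟩
  rw [← minpoly.aeval E x, ← hf, Polynomial.aeval_def, Polynomial.eval₂_map]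
  rfl

section Valuation

variable {ι : PowerSeries k →ₐ[k] F} (hι : IsContractiveEmbedding ι)
include hι

theorem IsContractiveEmbedding.exists_norm_eq_pow {f : PowerSeries k} (hf : f ≠ 0) :
    ∃ m : ℕ, PowerSeries.X ^ m ∣ f ∧ ‖ι f‖ = ‖ι PowerSeries.X‖ ^ m := by
  obtain ⟨v, hv⟩ := (PowerSeries.isUnit_divided_by_X_pow_order hf).exists_right_inv
  have hunit : ‖ι f.divXPowOrder‖ = 1 := by
    have h : ‖ι f.divXPowOrder‖ * ‖ι v‖ = 1 := by
      rw [← norm_mul, ← map_mul, hv, map_one, norm_one]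
    refine (hι.norm_le_one _).antisymm (h.ge.trans ?_)
    exact mul_le_of_le_one_right (norm_nonneg _) (hι.norm_le_one v)
  refine ⟨f.order.toNat, ⟨_, PowerSeries.X_pow_order_mul_divXPowOrder.symm⟩, ?_⟩
  conv_lhs => rw [← PowerSeries.X_pow_order_mul_divXPowOrder (f := f)]
  rw [map_mul, norm_mul, map_pow, norm_pow, hunit, mul_one]

theorem IsContractiveEmbedding.injective : Function.Injective ι :=
  (injective_iff_map_eq_zero ι).2 fun f hf ↦ by
    by_contra hne
    obtain ⟨m, -, hm⟩ := hι.exists_norm_eq_pow hne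
    exact (pow_pos hι.norm_X_pos m).ne' (by rw [← hm, hf, norm_zero])

theorem IsContractiveEmbedding.X_pow_dvd_iff {f : PowerSeries k} {m : ℕ} :
    PowerSeries.X ^ m ∣ f ↔ ‖ι f‖ ≤ ‖ι PowerSeries.X‖ ^ m := by
  constructor
  · rintro ⟨g, rfl⟩
    rw [map_mul, norm_mul, map_pow, norm_pow]
    exact mul_le_of_le_one_right (by positivity) (hι.norm_le_one g)
  · intro h
    obtain rfl | hf := eq_or_ne f 0
    · exact dvd_zero _
    obtain ⟨j, hj, hnorm⟩ := hι.exists_norm_eq_pow hf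
    rw [hnorm, pow_le_pow_iff_right_of_lt_one₀ hι.norm_X_pos hι.norm_X_lt_one] at h
    exact (pow_dvd_pow _ h).trans hj

end Valuation

end ContractiveEmbedding

section DoublyExponentialDecay

open Filter

variable {α β θ : ℝ}

theorem eventually_forall_sq_le_pow_mul_lt_pow (hθ : 0 ≤ θ) (hθ1 : θ < 1) (hβ : 0 < β) {L : ℝ}
    (hL : 0 ≤ L) :
    ∀ᶠ m : ℕ in atTop, ∀ M, m ^ 2 ≤ M → θ ^ M * L < β ^ m := by
  have hlim := (tendsto_pow_atTop_nhds_zero_of_lt_one hθ hθ1).mul_const (max L 1)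
  rw [zero_mul] at hlim
  filter_upwards [hlim.eventually_lt_const hβ, eventually_ne_atTop 0] with m hm hm0 M hM
  calc θ ^ M * L ≤ θ ^ (m * m) * max L 1 ^ m := by
        gcongr ?_ * ?_
        · exact pow_le_pow_of_le_one hθ hθ1.le (sq m ▸ hM)
        · exact (le_max_left L 1).trans (le_self_pow₀ (le_max_right L 1) hm0)
    _ = (θ ^ m * max L 1) ^ m := by rw [mul_pow, pow_mul]
    _ < β ^ m := pow_lt_pow_left₀ hm (by positivity) hm0

theorem eventually_forall_sq_le_pow_mul_pow_mul_lt_of_lex {α' β' κ L : ℝ} (hα : 0 < α) (hβ : 0 < β)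
    (hκ : 0 < κ) (hα' : 0 ≤ α') (hβ' : 0 ≤ β') (hβ'1 : β' ≤ 1) (hL : 0 ≤ L)
    (h : α' < α ∨ α' = α ∧ β' < β) :
    ∀ᶠ m : ℕ in atTop, ∀ M, m ^ 2 ≤ M → α' ^ M * β' ^ m * L < α ^ M * β ^ m * κ := by
  obtain h | ⟨rfl, h⟩ := h
  · filter_upwards [eventually_forall_sq_le_pow_mul_lt_pow (div_nonneg hα' hα.le)
      ((div_lt_one hα).2 h) hβ (div_nonneg hL hκ.le)] with m hm M hM
    calc α' ^ M * β' ^ m * L ≤ α' ^ M * 1 * L := by gcongr; exact pow_le_one₀ hβ' hβ'1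
      _ = α ^ M * ((α' / α) ^ M * (L / κ)) * κ := by rw [div_pow]; field_simp
      _ < α ^ M * β ^ m * κ := by gcongr; exact hm M hM
  · have hlim := (tendsto_pow_atTop_nhds_zero_of_lt_one (div_nonneg hβ' hβ.le)
      ((div_lt_one hβ).2 h)).mul_const (L / κ)
    rw [zero_mul] at hlim
    filter_upwards [hlim.eventually_lt_const one_pos] with m hm M _
    calc α' ^ M * β' ^ m * L = α' ^ M * β ^ m * κ * ((β' / β) ^ m * (L / κ)) := by
          rw [div_pow]; field_simp
      _ < α' ^ M * β ^ m * κ * 1 := by gcongr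
      _ = α' ^ M * β ^ m * κ := mul_one _

/- Among the terms with `c w z ≠ 0`, the one with lexicographically largest `(‖w‖, ‖z‖)` dominates
the others. -/
theorem exists_eventually_norm_sum_sum_pow_smul_eq {F V : Type*} [NormedField F]
    [NormedAddCommGroup V] [NormedSpace F V] [IsUltrametricDist V] {W Z : Finset F}
    (hW : ∀ w ∈ W, w ≠ 0 ∧ ‖w‖ < 1) (hZ : ∀ z ∈ Z, z ≠ 0 ∧ ‖z‖ < 1)
    (hWi : Set.InjOn (‖·‖) (W : Set F)) (hZi : Set.InjOn (‖·‖) (Z : Set F)) {c : F → F → V}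
    (hc : ∃ w ∈ W, ∃ z ∈ Z, c w z ≠ 0) :
    ∃ α ∈ Set.Ioo (0 : ℝ) 1, ∃ β ∈ Set.Ioo (0 : ℝ) 1, ∃ κ > 0, ∀ᶠ m : ℕ in atTop, ∀ M,
      m ^ 2 ≤ M → ‖∑ w ∈ W, ∑ z ∈ Z, (w ^ M * z ^ m) • c w z‖ = α ^ M * β ^ m * κ := by
  classical
  obtain ⟨w₀, hw₀, z₀, hz₀, hwz₀⟩ := hc
  obtain ⟨⟨w, z⟩, hwz, hmax⟩ := ((W ×ˢ Z).filter fun x ↦ c x.1 x.2 ≠ 0).exists_max_image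
    (fun x ↦ toLex (‖x.1‖, ‖x.2‖)) ⟨(w₀, z₀), by simp [hw₀, hz₀, hwz₀]⟩
  simp only [Finset.mem_filter, Finset.mem_product] at hwz hmax
  obtain ⟨⟨hw, hz⟩, hwz⟩ := hwz
  have hα := norm_pos_iff.2 (hW w hw).1
  have hβ := norm_pos_iff.2 (hZ z hz).1
  have hκ := norm_pos_iff.2 hwz
  have hlt : ∀ x ∈ W ×ˢ Z, x ≠ (w, z) → ∀ᶠ m : ℕ in atTop, ∀ M, m ^ 2 ≤ M →
      ‖x.1‖ ^ M * ‖x.2‖ ^ m * ‖c x.1 x.2‖ < ‖w‖ ^ M * ‖z‖ ^ m * ‖c w z‖ := by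
    rintro ⟨w', z'⟩ hx hne
    obtain ⟨hw', hz'⟩ := Finset.mem_product.1 hx
    obtain hzero | hzero := eq_or_ne (c w' z') 0
    · refine .of_forall fun m M _ ↦ ?_
      simp only [hzero, norm_zero, mul_zero]
      positivity
    refine eventually_forall_sq_le_pow_mul_pow_mul_lt_of_lex hα hβ hκ (norm_nonneg _)
      (norm_nonneg _) (hZ z' hz').2.le (norm_nonneg _) ?_
    obtain h | ⟨h, h'⟩ := Prod.Lex.le_iff.1 (hmax (w', z') ⟨⟨hw', hz'⟩, hzero⟩)
    · exact .inl h
    · refine .inr ⟨h, h'.lt_of_ne fun h'' ↦ hne ?_⟩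
      exact Prod.ext (hWi hw' hw h) (hZi hz' hz h'')
  refine ⟨‖w‖, ⟨hα, (hW w hw).2⟩, ‖z‖, ⟨hβ, (hZ z hz).2⟩, ‖c w z‖, hκ, ?_⟩
  filter_upwards [(Filter.eventually_all_finset (W ×ˢ Z)).2 fun x hx ↦
    eventually_imp_distrib_left.2 (hlt x hx)] with m hm M hM
  have hnorm (x : F × F) : ‖(x.1 ^ M * x.2 ^ m) • c x.1 x.2‖ =
      ‖x.1‖ ^ M * ‖x.2‖ ^ m * ‖c x.1 x.2‖ := by
    rw [norm_smul, norm_mul, norm_pow, norm_pow]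
  rw [← Finset.sum_product', IsNonarchimedean.apply_sum_eq_of_lt
    IsUltrametricDist.isNonarchimedean_norm (fun a ↦ (norm_neg a).symm)
    (Finset.mk_mem_product hw hz), hnorm]
  intro x hx hne
  rw [hnorm, hnorm]
  exact hm x hx hne M hM

theorem eventually_injOn_pow_pow_mul_pow_pow (hα : α ∈ Set.Ioo (0 : ℝ) 1)
    (hβ : β ∈ Set.Ioo (0 : ℝ) 1) {q : ℕ} (hq : 2 ≤ q) :
    ∀ᶠ T : ℕ in atTop, Set.InjOn (fun x : ℕ × ℕ ↦ α ^ q ^ x.1 * β ^ q ^ x.2)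
      {x | T ≤ x.2 ∧ 2 * x.2 ≤ x.1} := by
  have hlt : ∀ᶠ T : ℕ in atTop, ∀ a b a' b', T ≤ b → 2 * b ≤ a → a < a' →
      α ^ q ^ a' * β ^ q ^ b' < α ^ q ^ a * β ^ q ^ b := by
    filter_upwards [eventually_forall_ge_atTop.2 ((tendsto_pow_atTop_atTop_of_one_lt hq).eventually
      (eventually_forall_sq_le_pow_mul_lt_pow hα.1.le hα.2 hβ.1 zero_le_one))]
      with T hT a b a' b' hb hba ha
    have hαβ : α ^ q ^ a < β ^ q ^ b := by
      simpa only [mul_one] using hT b hb (q ^ a)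
        (by rw [← pow_mul, mul_comm]; exact Nat.pow_le_pow_right (by lia) hba)
    have hdouble : q ^ a + q ^ a ≤ q ^ a' :=
      calc q ^ a + q ^ a = q ^ a * 2 := (mul_two _).symm
        _ ≤ q ^ a * q := Nat.mul_le_mul_left _ hq
        _ ≤ q ^ a' := Nat.pow_le_pow_right (by lia) ha
    calc α ^ q ^ a' * β ^ q ^ b' ≤ α ^ (q ^ a + q ^ a) * 1 :=
          mul_le_mul (pow_le_pow_of_le_one hα.1.le hα.2.le hdouble)
            (pow_le_one₀ hβ.1.le hβ.2.le) (pow_pos hβ.1 _).le (pow_pos hα.1 _).le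
      _ = α ^ q ^ a * α ^ q ^ a := by rw [mul_one, pow_add]
      _ < α ^ q ^ a * β ^ q ^ b := mul_lt_mul_of_pos_left hαβ (pow_pos hα.1 _)
  filter_upwards [hlt] with T hT
  rintro ⟨a, b⟩ ⟨hb, hab⟩ ⟨a', b'⟩ ⟨hb', hab'⟩ heq
  obtain ha | rfl | ha := lt_trichotomy a a'
  · exact absurd heq (hT a b a' b' hb hab ha).ne'
  · have hpow := (pow_right_strictAnti₀ hβ.1 hβ.2).injective
      (mul_left_cancel₀ (pow_pos hα.1 _).ne' heq)
    exact Prod.ext rfl (Nat.pow_right_injective hq hpow)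
  · exact absurd heq (hT a' b' a b hb' hab' ha).ne

theorem exists_le_mul_of_pow_mul_pow_mul_eq {c κ : ℝ} (hα : 0 < α) (hβ : β ∈ Set.Ioo (0 : ℝ) 1)
    (hκ : 0 < κ) (hc : c ∈ Set.Ioo (0 : ℝ) 1) :
    ∃ C : ℕ, ∀ M m l : ℕ, m ≤ M → M ≠ 0 → α ^ M * β ^ m * κ = c ^ l → l ≤ C * M := by
  obtain ⟨⟨hβ, hβ1⟩, hc, hc1⟩ := And.intro hβ hc
  have hκ' : 0 < min κ 1 := lt_min hκ one_pos
  obtain ⟨C, hC⟩ := exists_pow_lt_of_lt_one (mul_pos (mul_pos hα hβ) hκ') hc1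
  refine ⟨C, fun M m l hm hM h ↦ (pow_le_pow_iff_right_of_lt_one₀ hc hc1).1 ?_⟩
  calc c ^ (C * M) ≤ (α * β * min κ 1) ^ M := by rw [pow_mul]; gcongr
    _ = α ^ M * β ^ M * min κ 1 ^ M := by rw [mul_pow, mul_pow]
    _ ≤ α ^ M * β ^ m * κ := by
        gcongr ?_ * ?_ * ?_
        · exact pow_le_pow_of_le_one hβ.le hβ1.le hm
        · exact (pow_le_of_le_one hκ'.le (min_le_right _ _) hM).trans (min_le_left _ _)
    _ = c ^ l := h

theorem exists_sq_le_card_of_injOn {E : Type*} {v : ℕ × ℕ → E} {w : ℕ → E} {P : ℕ × ℕ → ℕ → Prop}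
    {T : ℕ} (hinj : Set.InjOn v {x | T ≤ x.2 ∧ 2 * x.2 ≤ x.1})
    (hv : ∀ x : ℕ × ℕ, T ≤ x.2 → 2 * x.2 ≤ x.1 → ∃ l, P x l ∧ v x = w l) :
    ∃ S : Finset ℕ, T * T ≤ S.card ∧ ∀ l ∈ S, ∃ x : ℕ × ℕ, x.1 < 5 * T ∧ P x l := by
  choose! l hl hvl using hv
  let box := Finset.Ico (4 * T) (5 * T) ×ˢ Finset.Ico T (2 * T)
  have hbox {x : ℕ × ℕ} (hx : x ∈ box) : T ≤ x.2 ∧ 2 * x.2 ≤ x.1 ∧ x.1 < 5 * T := by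
    simp only [box, Finset.mem_product, Finset.mem_Ico] at hx
    lia
  have hcard : box.card = T * T := by
    rw [Finset.card_product, Nat.card_Ico, Nat.card_Ico]
    congr 1 <;> lia
  have hl_inj : Set.InjOn l box := by
    intro x hx y hy hxy
    obtain ⟨hx₁, hx₂, -⟩ := hbox hx
    obtain ⟨hy₁, hy₂, -⟩ := hbox hy
    exact hinj ⟨hx₁, hx₂⟩ ⟨hy₁, hy₂⟩ (by rw [hvl x hx₁ hx₂, hxy, hvl y hy₁ hy₂])
  refine ⟨box.image l, ?_, ?_⟩
  · rw [Finset.card_image_of_injOn hl_inj, hcard]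
  · rw [Finset.forall_mem_image]
    intro x hx
    obtain ⟨hx₁, hx₂, hx₃⟩ := hbox hx
    exact ⟨x, hx₃, hl x hx₁ hx₂⟩

/- The pairs `(a, b)` in a box of side `T` contribute `T ^ 2` elements of `J` below `p ^ O(T)`. -/
theorem not_eventually_exists_mem_pow_mul_pow_mul_eq {c κ : ℝ} (hα : α ∈ Set.Ioo (0 : ℝ) 1)
    (hβ : β ∈ Set.Ioo (0 : ℝ) 1) (hκ : 0 < κ) (hc : c ∈ Set.Ioo (0 : ℝ) 1) {p f : ℕ} (hp : 2 ≤ p)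
    (hf : f ≠ 0) {J : Set ℕ} {B : ℕ}
    (hJ : ∀ (r : ℕ) (S : Finset ℕ), (∀ l ∈ S, l ∈ J ∧ l < p ^ r) → S.card ≤ B * (r + 1)) :
    ¬ ∀ᶠ b in atTop, ∀ a, 2 * b ≤ a →
      ∃ l ∈ J, α ^ (p ^ f) ^ a * β ^ (p ^ f) ^ b * κ = c ^ l := by
  intro hev
  have hq : 2 ≤ p ^ f := hp.trans (Nat.le_self_pow hf p)
  obtain ⟨C, hC⟩ := exists_le_mul_of_pow_mul_pow_mul_eq hα.1 hβ hκ hc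
  obtain ⟨T, hT, hinj, hlarge⟩ := ((eventually_forall_ge_atTop.2 hev).and
    ((eventually_injOn_pow_pow_mul_pow_pow hα hβ hq).and
      (eventually_gt_atTop (B * (C + 5 * f + 1))))).exists
  have hinj' : Set.InjOn (fun x : ℕ × ℕ ↦ α ^ (p ^ f) ^ x.1 * β ^ (p ^ f) ^ x.2 * κ)
      {x | T ≤ x.2 ∧ 2 * x.2 ≤ x.1} :=
    fun x hx y hy h ↦ hinj hx hy (mul_right_cancel₀ hκ.ne' h)
  obtain ⟨S, hTS, hS⟩ := exists_sq_le_card_of_injOn hinj' fun x hb hab ↦ by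
    obtain ⟨l, hl, heq⟩ := hT x.2 hb x.1 hab
    exact ⟨l, (⟨hl, hC _ _ l (Nat.pow_le_pow_right (by lia) (by lia)) (by positivity) heq⟩ :
      l ∈ J ∧ l ≤ C * (p ^ f) ^ x.1), heq⟩
  have hcard : S.card ≤ B * (C + f * (5 * T) + 1) := by
    refine hJ _ S fun l hl ↦ ?_
    obtain ⟨x, hx, hlJ, hlC⟩ := hS l hl
    refine ⟨hlJ, ?_⟩
    calc l ≤ C * p ^ (f * x.1) := by rwa [pow_mul]
      _ < p ^ C * p ^ (f * (5 * T)) := Nat.mul_lt_mul_of_lt_of_le (Nat.lt_pow_self hp)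
          (Nat.pow_le_pow_right (by lia) (by gcongr)) (by positivity)
      _ = p ^ (C + f * (5 * T)) := (pow_add _ _ _).symm
  have hT_pos : 0 < T := Nat.zero_lt_of_lt hlarge
  have hle : T * T ≤ B * (C + 5 * f + 1) * T :=
    calc T * T ≤ B * (C + f * (5 * T) + 1) := hTS.trans hcard
      _ ≤ B * ((C + 5 * f + 1) * T) := by gcongr; nlinarith
      _ = B * (C + 5 * f + 1) * T := (mul_assoc _ _ _).symm
  exact hlarge.not_ge (Nat.le_of_mul_le_mul_right hle hT_pos)

end DoublyExponentialDecay

section PowerExpansion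

variable {F : Type*}

section NormBasis

variable [NormedField F] {R : Type*} [CommRing R] [Algebra R F]

theorem exists_sub_mem_span_forall_norm_ne
    (hR : ∀ x : F, ‖x‖ ≤ 1 → ∃ s : R, ‖x - algebraMap R F s‖ < 1)
    {W : Finset F} (hW : ∀ w ∈ W, w ≠ 0) (x : F) :
    ∃ y, x - y ∈ Submodule.span R (W : Set F) ∧ ‖y‖ ≤ ‖x‖ ∧ ∀ w ∈ W, ‖w‖ ≠ ‖y‖ := by
  classical
  induction h : (W.filter fun w ↦ ‖w‖ ≤ ‖x‖).card using Nat.strong_induction_on generalizing x with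
  | _ d ih =>
  subst h
  by_cases! hx : ∀ w ∈ W, ‖w‖ ≠ ‖x‖
  · exact ⟨x, by simp, le_rfl, hx⟩
  obtain ⟨w, hw, hwx⟩ := hx
  obtain ⟨s, hs⟩ := hR (x / w) (by rw [norm_div, hwx]; exact div_self_le_one _)
  have hlt : ‖x - s • w‖ < ‖x‖ := calc
    ‖x - s • w‖ = ‖x / w - algebraMap R F s‖ * ‖w‖ := by
      rw [← norm_mul, sub_mul, div_mul_cancel₀ _ (hW w hw), Algebra.smul_def]
    _ < ‖x‖ := hwx ▸ mul_lt_of_lt_one_left (norm_pos_iff.2 (hW w hw)) hs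
  obtain ⟨y, hy, hyx, hyW⟩ := ih _ (Finset.card_lt_card <| Finset.ssubset_iff_exists_cons_subset.2
    ⟨w, by simp [hwx, hlt], by
      intro v hv
      obtain rfl | hv := Finset.mem_cons.1 hv
      · exact Finset.mem_filter.2 ⟨hw, hwx.le⟩
      · rw [Finset.mem_filter] at hv ⊢
        exact ⟨hv.1, hv.2.trans hlt.le⟩⟩) (x - s • w) rfl
  refine ⟨y, ?_, hyx.trans hlt.le, hyW⟩
  rw [← sub_add_cancel (x - y) (s • w), sub_right_comm]
  exact add_mem hy (Submodule.smul_mem _ s (Submodule.subset_span hw))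

theorem exists_injOn_norm_subset_span (hR : ∀ x : F, ‖x‖ ≤ 1 → ∃ s : R, ‖x - algebraMap R F s‖ < 1)
    {S : Finset F} {c : ℝ} (hS : ∀ x ∈ S, ‖x‖ ≤ c) :
    ∃ W : Finset F, (∀ w ∈ W, w ≠ 0 ∧ ‖w‖ ≤ c) ∧ Set.InjOn (‖·‖) (W : Set F) ∧
      (S : Set F) ⊆ Submodule.span R (W : Set F) := by
  classical
  induction S using Finset.induction_on with
  | empty => exact ⟨∅, by simp⟩
  | insert x S _ ih =>
    rw [Finset.forall_mem_insert] at hS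
    obtain ⟨W, hW, hinj, hSW⟩ := ih hS.2
    obtain ⟨y, hy, hyx, hyW⟩ := exists_sub_mem_span_forall_norm_ne hR (fun w hw ↦ (hW w hw).1) x
    obtain rfl | hy0 := eq_or_ne y 0
    · refine ⟨W, hW, hinj, ?_⟩
      rw [Finset.coe_insert, Set.insert_subset_iff]
      exact ⟨by simpa using hy, hSW⟩
    have hle : Submodule.span R (W : Set F) ≤ Submodule.span R (insert y (W : Set F)) :=
      Submodule.span_mono (Set.subset_insert _ _)
    refine ⟨insert y W, Finset.forall_mem_insert _ _ _ |>.2 ⟨⟨hy0, hyx.trans hS.1⟩, hW⟩, ?_, ?_⟩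
    · rw [Finset.coe_insert, Set.injOn_insert fun hyW' ↦ hyW y hyW' rfl]
      exact ⟨hinj, fun ⟨w, hw, h⟩ ↦ hyW w hw h⟩
    · rw [Finset.coe_insert, Finset.coe_insert, Set.insert_subset_iff]
      refine ⟨?_, hSW.trans hle⟩
      rw [← sub_add_cancel x y]
      exact add_mem (hle hy) (Submodule.subset_span (Set.mem_insert _ _))

end NormBasis

theorem exists_forall_dvd_pow_char_pow_eq {k : Type*} [Field k] [Finite k] [Field F] [Algebra k F]
    (p : ℕ) [CharP k p] {S : Finset F} (hS : ∀ s ∈ S, IsIntegral k s) :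
    ∃ f > 0, ∀ m, f ∣ m → ∀ s ∈ S, s ^ p ^ m = s := by
  let E := IntermediateField.adjoin k (S : Set F)
  have : FiniteDimensional k E := IntermediateField.finiteDimensional_adjoin hS
  have : Finite E := Module.finite_of_finite k
  have : Fintype E := Fintype.ofFinite E
  have : CharP E p := charP_of_injective_algebraMap (algebraMap k E).injective p
  obtain ⟨f, -, hf⟩ := FiniteField.card E p
  refine ⟨f, f.pos, ?_⟩
  rintro _ ⟨a, rfl⟩ s hs
  have h := FiniteField.pow_card_pow a (⟨s, IntermediateField.subset_adjoin k _ hs⟩ : E)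
  rw [hf, ← pow_mul] at h
  exact congrArg Subtype.val h

theorem exists_forall_dvd_pow_char_pow_eq_sum [NormedField F] {k : Type*} [Field k] [Finite k]
    [Algebra k F] (p : ℕ) [Fact p.Prime] [CharP k p]
    (hk : ∀ x : F, ‖x‖ ≤ 1 → ∃ s, IsIntegral k s ∧ ‖x - s‖ < 1) {S : Finset F} {c : ℝ}
    (hS : ∀ x ∈ S, ‖x‖ ≤ c) :
    ∃ f > 0, ∃ (W : Finset F) (a : F → F → F), (∀ w ∈ W, w ≠ 0 ∧ ‖w‖ ≤ c) ∧
      Set.InjOn (‖·‖) (W : Set F) ∧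
      ∀ m, f ∣ m → ∀ x ∈ S, x ^ p ^ m = ∑ w ∈ W, a x w * w ^ p ^ m := by
  classical
  have : CharP F p := charP_of_injective_algebraMap (algebraMap k F).injective p
  obtain ⟨W, hW, hinj, hSW⟩ := exists_injOn_norm_subset_span (R := integralClosure k F)
    (fun x hx ↦ let ⟨s, hs, h⟩ := hk x hx; ⟨⟨s, hs⟩, h⟩) hS
  choose! s _ hs using fun x (hx : x ∈ S) ↦ Submodule.mem_span_finset.1 (hSW hx)
  obtain ⟨f, hf, hfs⟩ := exists_forall_dvd_pow_char_pow_eq (k := k) p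
    (S := (S ×ˢ W).image fun x ↦ (s x.1 x.2 : F))
    (Finset.forall_mem_image.2 fun x _ ↦ (mem_integralClosure_iff k F).1 (s x.1 x.2).2)
  refine ⟨f, hf, W, fun x w ↦ s x w, hW, hinj, fun m hm x hx ↦ ?_⟩
  conv_lhs => rw [← hs x hx, sum_pow_char_pow]
  refine Finset.sum_congr rfl fun w hw ↦ ?_
  rw [Algebra.smul_def, mul_pow]
  congr 1
  exact hfs m hm _ (Finset.mem_image_of_mem (fun x : F × F ↦ (s x.1 x.2 : F))
    (Finset.mk_mem_product hx hw))

section Lagrange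

variable [Field F]

theorem exists_forall_pow_eq_sum_smul {A ι : Type*} [Ring A] [Algebra F A] {Y : A} {S : Finset ι}
    {v : ι → F} (hv : Set.InjOn v S) (hY : Polynomial.aeval Y (Lagrange.nodal S v) = 0) :
    ∃ e : ι → A, ∀ j : ℕ, Y ^ j = ∑ i ∈ S, v i ^ j • e i := by
  classical
  refine ⟨fun i ↦ Polynomial.aeval Y (Lagrange.basis S v i), fun j ↦ ?_⟩
  obtain ⟨q, hq⟩ : Lagrange.nodal S v ∣
      Polynomial.X ^ j - Lagrange.interpolate S v fun i ↦ v i ^ j := by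
    refine Finset.prod_dvd_of_coprime (fun a ha b hb hab ↦
      Polynomial.isCoprime_X_sub_C_of_isUnit_sub (sub_ne_zero.2 (hv.ne ha hb hab)).isUnit) ?_
    intro i hi
    rw [Polynomial.dvd_iff_isRoot, Polynomial.IsRoot, Polynomial.eval_sub, Polynomial.eval_pow,
      Polynomial.eval_X, Lagrange.eval_interpolate_at_node _ hv hi, sub_self]
  have h := congrArg (Polynomial.aeval Y) hq
  rw [map_mul, hY, zero_mul, map_sub, sub_eq_zero] at h
  simpa [Lagrange.interpolate_apply, Algebra.smul_def] using h

theorem charpoly_dvd_nodal_roots_pow [IsAlgClosed F] [DecidableEq F] {n : Type*} [Fintype n]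
    [DecidableEq n] (X : Matrix n n F) {M : ℕ} (hM : Fintype.card n ≤ M) :
    X.charpoly ∣ Lagrange.nodal X.charpoly.roots.toFinset id ^ M := by
  conv_lhs => rw [(IsAlgClosed.splits X.charpoly).eq_prod_roots_of_monic X.charpoly_monic]
  rw [Lagrange.nodal, Finset.prod, Multiset.toFinset_val, ← Multiset.prod_nsmul,
    ← Multiset.map_nsmul]
  refine Multiset.prod_dvd_prod_of_le (Multiset.map_le_map (Multiset.le_iff_count.2 fun a ↦ ?_))
  by_cases ha : a ∈ X.charpoly.roots
  · rw [Multiset.count_nsmul, Multiset.count_dedup, if_pos ha, mul_one]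
    exact (Multiset.count_le_card _ _).trans ((Polynomial.card_roots' _).trans (by simpa using hM))
  · simp [ha]

theorem aeval_pow_char_pow_nodal_roots [IsAlgClosed F] [DecidableEq F] (p : ℕ) [Fact p.Prime]
    [CharP F p] {n : Type*} [Fintype n] [DecidableEq n] (X : Matrix n n F) {N : ℕ}
    (hN : Fintype.card n ≤ p ^ N) :
    Polynomial.aeval (X ^ p ^ N) (Lagrange.nodal X.charpoly.roots.toFinset (· ^ p ^ N)) = 0 := by
  have hcomp : (Lagrange.nodal X.charpoly.roots.toFinset (· ^ p ^ N)).comp (Polynomial.X ^ p ^ N) =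
      Lagrange.nodal X.charpoly.roots.toFinset id ^ p ^ N := by
    rw [Lagrange.nodal, Lagrange.nodal, Polynomial.prod_comp, ← Finset.prod_pow]
    refine Finset.prod_congr rfl fun μ _ ↦ ?_
    rw [sub_pow_char_pow]
    simp
  obtain ⟨q, hq⟩ := charpoly_dvd_nodal_roots_pow X hN
  rw [show X ^ p ^ N = Polynomial.aeval X (Polynomial.X ^ p ^ N : Polynomial F) by simp,
    ← Polynomial.aeval_comp, hcomp, hq, map_mul, Matrix.aeval_self_charpoly, zero_mul]

end Lagrange

section Ultrametric

open scoped Matrix.Norms.Elementwise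

variable {k : Type*} [Field k] [Finite k] [NormedField F] [IsUltrametricDist F] [Algebra k F]
  {p : ℕ} [Fact p.Prime] [CharP k p] {n : Type*} [Fintype n]

theorem norm_mulVec_le_mul (X : Matrix n n F) (v : n → F) : ‖X *ᵥ v‖ ≤ ‖X‖ * ‖v‖ := by
  refine (pi_norm_le_iff_of_nonneg (by positivity)).2 fun i ↦ ?_
  refine IsUltrametricDist.norm_sum_le_of_forall_le_of_nonneg (by positivity) fun j _ ↦ ?_
  rw [norm_mul]
  gcongr
  exacts [Matrix.norm_entry_le_entrywise_sup_norm X, norm_le_pi_norm v j]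

theorem norm_le_of_isRoot_charpoly [DecidableEq n] {X : Matrix n n F} {μ : F}
    (hμ : X.charpoly.IsRoot μ) : ‖μ‖ ≤ ‖X‖ := by
  rw [← Matrix.charpoly_toLin', ← Module.End.hasEigenvalue_iff_isRoot_charpoly] at hμ
  obtain ⟨v, hv⟩ := hμ.exists_hasEigenvector
  have h : ‖μ‖ * ‖v‖ ≤ ‖X‖ * ‖v‖ := by
    rw [← norm_smul, ← hv.apply_eq_smul, Matrix.toLin'_apply]
    exact norm_mulVec_le_mul X v
  exact le_of_mul_le_mul_right h (norm_pos_iff.2 hv.2)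

variable [DecidableEq n] [IsAlgClosed F]

theorem exists_forall_dvd_pow_eq_sum_smul
    (hk : ∀ x : F, ‖x‖ ≤ 1 → ∃ s, IsIntegral k s ∧ ‖x - s‖ < 1) {N : ℕ}
    (hN : Fintype.card n ≤ p ^ N) {X : Matrix n n F} (hX : ‖X‖ < 1) :
    ∃ f > 0, ∃ (W : Finset F) (e : F → Matrix n n F), (∀ w ∈ W, w ≠ 0 ∧ ‖w‖ < 1) ∧
      Set.InjOn (‖·‖) (W : Set F) ∧
      ∀ m, f ∣ m → X ^ p ^ (N + m) = ∑ w ∈ W, w ^ p ^ m • e w := by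
  classical
  have : CharP F p := charP_of_injective_algebraMap (algebraMap k F).injective p
  obtain ⟨e, he⟩ := exists_forall_pow_eq_sum_smul (v := (· ^ p ^ N))
    (iterateFrobenius_inj F p N).injOn (aeval_pow_char_pow_nodal_roots p X hN)
  have hroots : ∀ μ ∈ X.charpoly.roots.toFinset, ‖μ ^ p ^ N‖ ≤ ‖X‖ := fun μ hμ ↦ by
    have hle := norm_le_of_isRoot_charpoly
      (Polynomial.isRoot_of_mem_roots (Multiset.mem_toFinset.1 hμ))
    rw [norm_pow]
    exact (pow_le_of_le_one (norm_nonneg _) (hle.trans hX.le) (by simp [NeZero.ne p])).trans hle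
  obtain ⟨f, hf, W, a, hW, hinj, ha⟩ :=
    exists_forall_dvd_pow_char_pow_eq_sum p hk (Finset.forall_mem_image.2 hroots)
  refine ⟨f, hf, W, fun w ↦ ∑ μ ∈ X.charpoly.roots.toFinset, a (μ ^ p ^ N) w • e μ,
    fun w hw ↦ ⟨(hW w hw).1, (hW w hw).2.trans_lt hX⟩, hinj, fun m hm ↦ ?_⟩
  simp only [pow_add, pow_mul, he, Finset.smul_sum]
  rw [Finset.sum_comm]
  refine Finset.sum_congr rfl fun μ hμ ↦ ?_
  rw [ha m hm _ (Finset.mem_image_of_mem _ hμ), Finset.sum_smul]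
  exact Finset.sum_congr rfl fun w _ ↦ by rw [smul_smul, mul_comm]

theorem exists_eventually_norm_commutator_pow_eq
    (hk : ∀ x : F, ‖x‖ ≤ 1 → ∃ s, IsIntegral k s ∧ ‖x - s‖ < 1) {N : ℕ}
    (hN : Fintype.card n ≤ p ^ N) {X Y : Matrix n n F} (hX : ‖X‖ < 1) (hY : ‖Y‖ < 1)
    (hXY : ¬ Commute (X ^ p ^ N) (Y ^ p ^ N)) :
    ∃ f > 0, ∃ α ∈ Set.Ioo (0 : ℝ) 1, ∃ β ∈ Set.Ioo (0 : ℝ) 1, ∃ κ > 0,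
      ∀ᶠ b : ℕ in Filter.atTop, ∀ a, 2 * b ≤ a →
        ‖X ^ p ^ (N + f * a) * Y ^ p ^ (N + f * b) - Y ^ p ^ (N + f * b) * X ^ p ^ (N + f * a)‖ =
          α ^ (p ^ f) ^ a * β ^ (p ^ f) ^ b * κ := by
  have : IsUltrametricDist (Matrix n n F) := inferInstanceAs (IsUltrametricDist (n → n → F))
  obtain ⟨f, hf, W, e, hW, hWi, he⟩ := exists_forall_dvd_pow_eq_sum_smul hk hN hX
  obtain ⟨f', hf', Z, e', hZ, hZi, he'⟩ := exists_forall_dvd_pow_eq_sum_smul hk hN hY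
  have hexp {l m : ℕ} (hl : f ∣ l) (hm : f' ∣ m) :
      X ^ p ^ (N + l) * Y ^ p ^ (N + m) - Y ^ p ^ (N + m) * X ^ p ^ (N + l) =
        ∑ w ∈ W, ∑ z ∈ Z, (w ^ p ^ l * z ^ p ^ m) • (e w * e' z - e' z * e w) := by
    rw [he l hl, he' m hm, Finset.sum_mul_sum, Finset.sum_mul_sum, Finset.sum_comm (s := Z),
      ← Finset.sum_sub_distrib]
    refine Finset.sum_congr rfl fun w _ ↦ ?_
    rw [← Finset.sum_sub_distrib]
    refine Finset.sum_congr rfl fun z _ ↦ ?_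
    rw [smul_mul_smul_comm, smul_mul_smul_comm, mul_comm (z ^ _), smul_sub]
  have hne : ∃ w ∈ W, ∃ z ∈ Z, e w * e' z - e' z * e w ≠ 0 := by
    by_contra! h
    refine hXY (sub_eq_zero.1 ((hexp (dvd_zero f) (dvd_zero f')).trans ?_))
    exact Finset.sum_eq_zero fun w hw ↦ Finset.sum_eq_zero fun z hz ↦ by rw [h w hw z hz, smul_zero]
  obtain ⟨α, hα, β, hβ, κ, hκ, hlim⟩ := exists_eventually_norm_sum_sum_pow_smul_eq hW hZ hWi hZi hne
  refine ⟨f * f', by positivity, α, hα, β, hβ, κ, hκ, ?_⟩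
  have hq : 1 < p ^ (f * f') := Nat.one_lt_pow (by positivity) (Fact.out : p.Prime).one_lt
  filter_upwards [(tendsto_pow_atTop_atTop_of_one_lt hq).eventually hlim] with b hb a hab
  rw [hexp (dvd_mul_of_dvd_left (dvd_mul_right _ _) a) (dvd_mul_of_dvd_left (dvd_mul_left _ _) b),
    ← hb _ (by rw [← pow_mul, mul_comm b]; exact Nat.pow_le_pow_right hq.le hab), ← pow_mul,
    ← pow_mul]

end Ultrametric

end PowerExpansion

section CommutingPowers

open IsLocalRing (maximalIdeal)
open scoped commutatorElement Matrix.Norms.Elementwise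

theorem two_pow_card_le_index {G : Type*} [Group G] {H : ℕ → Subgroup G} (hH : Antitone H)
    {S : Finset ℕ} (hS : ∀ l ∈ S, H (l + 1) ≠ H l) {m : ℕ} (hm : ∀ l ∈ S, l < m)
    [(H m).FiniteIndex] : 2 ^ S.card ≤ (H m).index := by
  induction S using Finset.induction_on_max generalizing m with
  | empty => exact Nat.one_le_iff_ne_zero.2 Subgroup.FiniteIndex.index_ne_zero
  | insert a S ha ih =>
    simp only [Finset.forall_mem_insert] at hS hm
    have _ : (H (a + 1)).FiniteIndex := Subgroup.finiteIndex_of_le (hH hm.1)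
    have _ : (H a).FiniteIndex := Subgroup.finiteIndex_of_le (hH a.le_succ)
    have _ : (H (a + 1)).IsFiniteRelIndex (H a) := Subgroup.isFiniteRelIndex_of_finiteIndex
    have hle : 2 ≤ (H (a + 1)).relIndex (H a) := by
      have h0 : (H (a + 1)).relIndex (H a) ≠ 0 := Subgroup.relIndex_ne_zero
      have h1 : (H (a + 1)).relIndex (H a) ≠ 1 := fun h ↦
        hS.1 ((hH a.le_succ).antisymm (Subgroup.relIndex_eq_one.1 h))
      lia
    rw [Finset.card_insert_of_notMem fun h ↦ (ha a h).false, pow_succ']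
    calc 2 * 2 ^ S.card ≤ (H (a + 1)).relIndex (H a) * (H a).index :=
          Nat.mul_le_mul hle (ih hS.2 ha)
      _ = (H (a + 1)).index := Subgroup.relIndex_mul_index (hH a.le_succ)
      _ ≤ (H m).index := Subgroup.index_antitone (hH hm.1)

variable {k : Type*} [Field k]

instance [Finite k] : Finite (PowerSeries k ⧸ maximalIdeal (PowerSeries k)) :=
  .of_equiv k PowerSeries.residueFieldOfPowerSeries.symm.toEquiv

section Norm

variable {n F : Type*} [Fintype n] [DecidableEq n] [NormedField F] [Algebra k F]
  {ι : PowerSeries k →ₐ[k] F} (hι : IsContractiveEmbedding ι)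
include hι

theorem IsContractiveEmbedding.mem_matrix_maximalIdeal_pow_iff {M : Matrix n n (PowerSeries k)}
    {m : ℕ} : M ∈ (maximalIdeal (PowerSeries k) ^ m).matrix n ↔
      ‖M.map ι‖ ≤ ‖ι PowerSeries.X‖ ^ m := by
  simp only [PowerSeries.maximalIdeal_eq_span_X, Ideal.span_singleton_pow, Ideal.mem_matrix,
    Ideal.mem_span_singleton, hι.X_pow_dvd_iff,
    Matrix.norm_le_iff (pow_nonneg (norm_nonneg (ι PowerSeries.X)) m), Matrix.map_apply]

theorem IsContractiveEmbedding.exists_norm_map_eq_pow {M : Matrix n n (PowerSeries k)}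
    (hM : M ≠ 0) : ∃ m : ℕ, M ∈ (maximalIdeal (PowerSeries k) ^ m).matrix n ∧
      M ∉ (maximalIdeal (PowerSeries k) ^ (m + 1)).matrix n ∧
      ‖M.map ι‖ = ‖ι PowerSeries.X‖ ^ m := by
  obtain ⟨i₀, j₀, h₀⟩ : ∃ i j, M i j ≠ 0 := by
    by_contra! h
    exact hM (Matrix.ext h)
  have _ : Nonempty (n × n) := ⟨(i₀, j₀)⟩
  obtain ⟨⟨i, j⟩, hmax⟩ := Finite.exists_max fun x : n × n ↦ ‖ι (M x.1 x.2)‖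
  have hnorm : ‖M.map ι‖ = ‖ι (M i j)‖ := le_antisymm
    ((Matrix.norm_le_iff (norm_nonneg _)).2 fun a b ↦ hmax (a, b))
    (Matrix.norm_entry_le_entrywise_sup_norm (M.map ι))
  have hpos : 0 < ‖ι (M i j)‖ :=
    (norm_pos_iff.2 ((map_ne_zero_iff ι hι.injective).2 h₀)).trans_le (hmax (i₀, j₀))
  obtain ⟨m, -, hm⟩ := hι.exists_norm_eq_pow
    ((map_ne_zero_iff ι hι.injective).1 (norm_pos_iff.1 hpos))
  refine ⟨m, ?_⟩
  rw [hι.mem_matrix_maximalIdeal_pow_iff, hι.mem_matrix_maximalIdeal_pow_iff, hnorm, hm]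
  exact ⟨le_rfl,
    (pow_lt_pow_right_of_lt_one₀ hι.norm_X_pos hι.norm_X_lt_one m.lt_succ_self).not_ge, rfl⟩

end Norm

section Main

variable {G n : Type*} [Group G] [Fintype n] [DecidableEq n] [Finite k]
  {ρ : G →* GL n (PowerSeries k)}

theorem congruenceSubgroup.card_jumps_le {p B : ℕ}
    (hB : ∀ r, (congruenceSubgroup ρ (maximalIdeal (PowerSeries k) ^ p ^ r)).index ≤ B ^ (r + 1))
    {r : ℕ} {S : Finset ℕ}
    (hS : ∀ l ∈ S, congruenceSubgroup ρ (maximalIdeal (PowerSeries k) ^ (l + 1)) ≠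
      congruenceSubgroup ρ (maximalIdeal (PowerSeries k) ^ l) ∧ l < p ^ r) :
    S.card ≤ B * (r + 1) := by
  have _ : Finite (PowerSeries k ⧸ maximalIdeal (PowerSeries k) ^ p ^ r) :=
    Ideal.finite_quotient_pow (maximalIdeal (PowerSeries k)).fg_of_isNoetherianRing _
  refine (Nat.pow_le_pow_iff_right Nat.one_lt_two).1 ?_
  calc 2 ^ S.card ≤ (congruenceSubgroup ρ (maximalIdeal (PowerSeries k) ^ p ^ r)).index :=
        two_pow_card_le_index (H := fun l ↦ congruenceSubgroup ρ (maximalIdeal (PowerSeries k) ^ l))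
          (fun _ _ h ↦ congruenceSubgroup.mono (Ideal.pow_le_pow_right h))
          (fun l hl ↦ (hS l hl).1) fun l hl ↦ (hS l hl).2
    _ ≤ B ^ (r + 1) := hB r
    _ ≤ (2 ^ B) ^ (r + 1) := by gcongr; exact Nat.lt_two_pow_self.le
    _ = 2 ^ (B * (r + 1)) := (pow_mul _ _ _).symm

theorem commute_pow_of_index_le {p : ℕ} [Fact p.Prime] [CharP k p] (hρ : Function.Injective ρ)
    {B N : ℕ}
    (hB : ∀ r, (congruenceSubgroup ρ (maximalIdeal (PowerSeries k) ^ p ^ r)).index ≤ B ^ (r + 1))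
    (hN : Fintype.card n ≤ p ^ N) {g h : G}
    (hg : g ∈ congruenceSubgroup ρ (maximalIdeal (PowerSeries k)))
    (hh : h ∈ congruenceSubgroup ρ (maximalIdeal (PowerSeries k))) :
    Commute (g ^ p ^ N) (h ^ p ^ N) := by
  have : CharP (PowerSeries k) p := charP_of_injective_algebraMap (PowerSeries.C_injective) p
  obtain ⟨F, _, _, _, _, ι, hι⟩ := exists_isContractiveEmbedding k
  let φ : Matrix n n (PowerSeries k) →+* Matrix n n F := ι.toRingHom.mapMatrix
  have hφ : Function.Injective φ := Matrix.map_injective hι.injective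
  have hlt {g : G} (hg : g ∈ congruenceSubgroup ρ (maximalIdeal (PowerSeries k))) :
      ‖φ (ρ g - 1)‖ < 1 := by
    rw [← pow_one (maximalIdeal _), congruenceSubgroup.mem_iff,
      hι.mem_matrix_maximalIdeal_pow_iff, pow_one] at hg
    exact hg.trans_lt hι.norm_X_lt_one
  rw [congruenceSubgroup.commute_pow_pow_iff hρ]
  by_contra hgh
  obtain ⟨f, hf, α, hα, β, hβ, κ, hκ, hev⟩ := exists_eventually_norm_commutator_pow_eq
    hι.exists_isIntegral_norm_sub_lt_one hN (hlt hg) (hlt hh) fun h ↦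
      hgh (.of_map hφ (by rwa [map_pow, map_pow]))
  refine not_eventually_exists_mem_pow_mul_pow_mul_eq hα hβ hκ
    ⟨hι.norm_X_pos, hι.norm_X_lt_one⟩ (Fact.out : p.Prime).two_le hf.ne'
    (fun r S ↦ congruenceSubgroup.card_jumps_le hB) ?_
  filter_upwards [hev] with b hb a hab
  simp only [← map_pow, ← map_mul, ← map_sub] at hb
  have hpos : 0 < α ^ (p ^ f) ^ a * β ^ (p ^ f) ^ b * κ :=
    mul_pos (mul_pos (pow_pos hα.1 _) (pow_pos hβ.1 _)) hκ
  obtain ⟨l, hl, hl', hnorm⟩ := hι.exists_norm_map_eq_pow (ne_zero_of_map (f := φ)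
    (norm_pos_iff.1 (hpos.trans_eq (hb a hab).symm)))
  rw [← congruenceSubgroup.commutator_pow_pow_mem_iff] at hl hl'
  exact ⟨l, fun h ↦ hl' (h ▸ hl), (hb a hab).symm.trans hnorm⟩

end Main

end CommutingPowers

section CentralPowers

open scoped TensorProduct

/- The norm of `κ(𝔭) ⊗[T] E` over the residue field `κ(𝔭)`. -/
theorem exists_monoidHom_residueField_algebraMap_eq_pow {T E : Type*} [CommRing T] [Ring E]
    [Algebra T E] [FaithfulSMul T E] [Module.Finite T E] (𝔭 : Ideal T) [𝔭.IsPrime] :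
    ∃ (χ : E →* 𝔭.ResidueField) (d : ℕ), 0 < d ∧
      ∀ t, χ (algebraMap T E t) = algebraMap T 𝔭.ResidueField t ^ d := by
  have _ : Nontrivial (𝔭.ResidueField ⊗[T] E) :=
    (Module.mem_support_iff_nontrivial_residueField_tensorProduct ⟨𝔭, ‹_›⟩).1 <| by
      simp only [Module.support_eq_zeroLocus, Module.annihilator_eq_bot.2 ‹FaithfulSMul T E›,
        Submodule.bot_coe, PrimeSpectrum.zeroLocus_singleton_zero, Set.mem_univ]
  let i : E →ₐ[T] 𝔭.ResidueField ⊗[T] E := Algebra.TensorProduct.includeRight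
  refine ⟨(Algebra.norm 𝔭.ResidueField).comp (i : E →* 𝔭.ResidueField ⊗[T] E),
    Module.finrank 𝔭.ResidueField (𝔭.ResidueField ⊗[T] E), Module.finrank_pos, fun t ↦ ?_⟩
  rw [← Algebra.norm_algebraMap (S := 𝔭.ResidueField ⊗[T] E)]
  refine congrArg (Algebra.norm 𝔭.ResidueField) ?_
  rw [← IsScalarTower.algebraMap_apply]
  exact i.commutes t

variable (p : ℕ) [Fact p.Prime] (k : Type*) [Field k] [CharP k p] {G : Type*} [Group G]

/- An element of norm one at every minimal prime is torsion, so the norms embed `G` into a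
commutative group. -/
include p in
theorem commute_of_pow_mem_range_algebraMap {T E : Type*} [CommRing T]
    [IsNoetherianRing T] [Ring E] [Algebra k E] [Algebra T E] [FaithfulSMul T E]
    [Module.Finite T E] {σ : G →* E} (hσ : Function.Injective σ)
    (htf : ∀ g : G, IsOfFinOrder g → g = 1) {Q : ℕ} (hQ : 0 < Q)
    (hpow : ∀ g, σ (g ^ Q) ∈ (algebraMap T E).range) (g h : G) : Commute g h := by
  have _ : Fintype (minimalPrimes T) := (minimalPrimes.finite_of_isNoetherianRing T).fintype
  have _ (𝔭 : minimalPrimes T) : 𝔭.1.IsPrime := 𝔭.2.1.1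
  choose χ d hd hχ using fun 𝔭 : minimalPrimes T ↦
    exists_monoidHom_residueField_algebraMap_eq_pow (E := E) 𝔭.1
  suffices hker : ∀ g : G, (∀ 𝔭, χ 𝔭 (σ g) = 1) → g = 1 by
    refine commutatorElement_eq_one_iff_commute.1 (hker _ fun 𝔭 ↦ ?_)
    have := map_commutatorElement (((χ 𝔭).comp σ).toHomUnits) g h
    rw [commutatorElement_eq_one_iff_mul_comm.2 (mul_comm (((χ 𝔭).comp σ).toHomUnits g) _)] at this
    exact congrArg Units.val this
  intro g hg
  obtain ⟨t, ht⟩ := hpow g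
  have hnil : IsNilpotent (t ^ (∏ 𝔭, d 𝔭) - 1) := by
    rw [← mem_nilradical, nilradical, ← Ideal.sInf_minimalPrimes, Submodule.mem_sInf]
    intro 𝔭 h𝔭
    have _ : Ideal.IsPrime 𝔭 := h𝔭.1.1
    rw [← Ideal.algebraMap_residueField_eq_zero, map_sub, map_pow, map_one, sub_eq_zero]
    obtain ⟨e, he⟩ := Finset.dvd_prod_of_mem d (Finset.mem_univ ⟨𝔭, h𝔭⟩)
    rw [he, pow_mul, ← hχ ⟨𝔭, h𝔭⟩, ht, map_pow, map_pow, hg, one_pow, one_pow]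
  have hpow_eq : (g ^ Q) ^ (∏ 𝔭, d 𝔭) = 1 := by
    refine eq_one_of_isNilpotent_sub_one k hσ (p := p)
      (fun g hg ↦ htf g (isOfFinOrder_iff_pow_eq_one.2 ⟨p, (Fact.out : p.Prime).pos, hg⟩)) ?_
    rw [map_pow, ← ht, ← map_pow, ← map_one (algebraMap T E), ← map_sub]
    exact hnil.map _
  rw [← pow_mul] at hpow_eq
  exact htf g (isOfFinOrder_iff_pow_eq_one.2
    ⟨_, mul_pos hQ (Finset.prod_pos fun 𝔭 _ ↦ hd 𝔭), hpow_eq⟩)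

variable {E : Type*} [Ring E] [Algebra k E] [Module.Finite k E]

include p in
theorem commute_of_pow_mem_subalgebraCenter {σ : G →* E} (hσ : Function.Injective σ)
    (htf : ∀ g : G, IsOfFinOrder g → g = 1) {Q : ℕ} (hQ : 0 < Q)
    (hpow : ∀ g : G, σ (g ^ Q) ∈ Subalgebra.center k E) (g h : G) : Commute g h := by
  let T := Subalgebra.center k E
  let _ : Algebra T E := .ofModule (fun t x y ↦ mul_assoc t.1 x y) fun t x y ↦ by
    simp only [Subalgebra.smul_def, smul_eq_mul, ← mul_assoc, Subalgebra.mem_center_iff.1 t.2 x]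
  have _ : Module.Finite T E := .of_restrictScalars_finite k T E
  have _ : IsNoetherianRing T := IsNoetherianRing.of_finite k T
  exact commute_of_pow_mem_range_algebraMap p k (T := T) hσ htf hQ
    (fun g ↦ ⟨⟨σ (g ^ Q), hpow g⟩, mul_one _⟩) g h

include p k in
theorem commute_of_pow_mem_center {σ : G →* E} (hσ : Function.Injective σ)
    (htf : ∀ g : G, IsOfFinOrder g → g = 1) {Q : ℕ} (hQ : 0 < Q)
    (hpow : ∀ g : G, g ^ Q ∈ Subgroup.center G) (g h : G) : Commute g h := by
  let E' := Algebra.adjoin k (Set.range σ)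
  let τ : G →* E' := σ.codRestrict E' fun a ↦ Algebra.subset_adjoin ⟨a, rfl⟩
  refine commute_of_pow_mem_subalgebraCenter p k (σ := τ)
    (fun a b hab ↦ hσ (congrArg Subtype.val hab)) htf hQ (fun g ↦ ?_) g h
  refine Subalgebra.mem_center_iff.2 fun x ↦ Subtype.ext ?_
  refine (Algebra.commute_of_mem_adjoin_of_forall_mem_commute x.2 ?_).eq.symm
  rintro _ ⟨a, rfl⟩
  exact .map (Subgroup.mem_center_iff.1 (hpow g) a).symm σ

end CentralPowers

section LinearCharacters

open scoped IsMulCommutative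

theorem finiteIndex_of_finite_range {G α : Type*} [Group G] [Finite α] {H : Subgroup G} (f : G → α)
    (hf : ∀ a b, f a = f b → a⁻¹ * b ∈ H) : H.FiniteIndex := by
  have _ : Finite (G ⧸ H) := .of_injective (fun q ↦ f q.out) fun q r hqr ↦ by
    rw [← q.out_eq', ← r.out_eq']
    exact QuotientGroup.eq.2 (hf _ _ hqr)
  exact Subgroup.finiteIndex_of_finite_quotient

variable {F E : Type*} [Field F] [Ring E] [Algebra F E]

variable (F) in
/-- The characters of a monoid `M` with a map `σ` to an algebra `E` that are given by a linear form
on `E`. For finite-dimensional `E` they play the role of the simultaneous eigenvalues of `M`. -/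
def linearCharacters {M : Type*} [MulOneClass M] (σ : M → E) : Set (M →* F) :=
  {χ | ∃ φ : E →ₗ[F] F, φ ∘ σ = χ}

theorem comp_conjNormal_mem_linearCharacters {G : Type*} [Group G] {σ : G →* E}
    {N : Subgroup G} [N.Normal] (g : G) {χ : N →* F}
    (hχ : χ ∈ linearCharacters F (σ.comp N.subtype)) :
    χ.comp (MulAut.conjNormal g : MulAut N).toMonoidHom ∈
      linearCharacters F (σ.comp N.subtype) := by
  obtain ⟨φ, hφ⟩ := hχ
  refine ⟨φ ∘ₗ LinearMap.mulLeftRight F (σ g, σ g⁻¹), funext fun c ↦ ?_⟩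
  refine Eq.trans ?_ (congrFun hφ (MulAut.conjNormal g c))
  simp only [LinearMap.coe_comp, Function.comp_apply, MonoidHom.coe_comp, Subgroup.coe_subtype,
    LinearMap.mulLeftRight_apply, MulAut.conjNormal_apply, map_mul]

variable [Module.Finite F E]

theorem finite_linearCharacters {M : Type*} [MulOneClass M] (σ : M → E) :
    Finite (linearCharacters F σ) := by
  let R : Module.Dual F E →ₗ[F] M → F := LinearMap.funLeft F F σ ∘ₗ LinearMap.ltoFun F E F F
  let v (χ : linearCharacters F σ) : LinearMap.range R := ⟨χ.1, χ.2⟩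
  have hv : LinearIndependent F v := .of_comp (LinearMap.range R).subtype
    ((linearIndependent_monoidHom M F).comp ((↑) : linearCharacters F σ → M →* F)
      Subtype.val_injective)
  exact hv.finite

variable {p : ℕ} [Fact p.Prime] [CharP F p] [IsAlgClosed F] {G : Type*} [Group G]

theorem eq_one_of_forall_linearCharacters {A : Type*} [CommGroup A] {σ : A →* E}
    (hσ : Function.Injective σ) (hp : ∀ a : A, a ^ p = 1 → a = 1) {a : A}
    (ha : ∀ χ ∈ linearCharacters F σ, χ a = 1) : a = 1 := by
  obtain ⟨T, _, τ, _, hτ⟩ := exists_finite_commRing_factorization (R := F) σ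
  have hτ_inj : Function.Injective τ := fun a b hab ↦ hσ <| by rw [← hτ a, ← hτ b, hab]
  refine eq_one_of_forall_minimalPrimes F hτ_inj hp fun 𝔭 h𝔭 ↦ ?_
  have _ : 𝔭.IsPrime := h𝔭.1.1
  have _ : IsArtinianRing T := .of_finite F T
  let _ : Field (T ⧸ 𝔭) := Ideal.Quotient.field 𝔭
  let ψ : T ⧸ 𝔭 →ₐ[F] F := IsAlgClosed.lift
  let ψ' : T →ₐ[F] F := ψ.comp (Ideal.Quotient.mkₐ F 𝔭)
  obtain ⟨φ, hφ⟩ := LinearMap.exists_extend (p := Subalgebra.toSubmodule T) ψ'.toLinearMap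
  have hψ' : (ψ' : T →* F).comp τ ∈ linearCharacters F σ := ⟨φ, funext fun c ↦
    (congrArg φ (hτ c).symm).trans (LinearMap.congr_fun hφ (τ c))⟩
  exact ψ.toRingHom.injective ((ha _ hψ').trans (map_one ψ).symm)

/- `G` permutes the finitely many linear characters of `N`, and these separate points. -/
variable (F) in
include F in
theorem finiteIndex_centralizer {σ : G →* E} (hσ : Function.Injective σ)
    (hp : ∀ g : G, g ^ p = 1 → g = 1) (N : Subgroup G) [N.Normal] [IsMulCommutative N] :
    (Subgroup.centralizer (N : Set G)).FiniteIndex := by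
  let X := linearCharacters F (σ.comp N.subtype)
  have _ : Finite X := finite_linearCharacters (σ.comp N.subtype)
  let act (g : G) (χ : X) : X := ⟨_, comp_conjNormal_mem_linearCharacters g χ.2⟩
  refine finiteIndex_of_finite_range act fun a b hab ↦ ?_
  have hconj (c : N) : MulAut.conjNormal a c = MulAut.conjNormal b c := by
    refine eq_of_mul_inv_eq_one (eq_one_of_forall_linearCharacters (F := F)
      (σ := σ.comp N.subtype) (hσ.comp N.subtype_injective)
      (fun d hd ↦ Subtype.ext (hp d (congrArg Subtype.val hd))) fun χ hχ ↦ ?_)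
    have h : χ (MulAut.conjNormal a c) = χ (MulAut.conjNormal b c) :=
      DFunLike.congr_fun (congrArg Subtype.val (congrFun hab ⟨χ, hχ⟩)) c
    rw [map_mul, h, ← map_mul, mul_inv_cancel, map_one]
  refine Subgroup.mem_centralizer_iff.2 fun c hc ↦ ?_
  have h := congrArg Subtype.val (hconj ⟨c, hc⟩)
  simp only [MulAut.conjNormal_apply] at h
  calc c * (a⁻¹ * b) = a⁻¹ * (a * c * a⁻¹) * b := by group
    _ = a⁻¹ * b * c := by rw [h]; group

variable (F p) in
include F p in
theorem isVirtuallyAbelian_of_commute_pow {σ : G →* E} (hσ : Function.Injective σ)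
    (htf : ∀ g : G, IsOfFinOrder g → g = 1) {Q : ℕ} (hQ : 0 < Q)
    (hcomm : ∀ g h : G, Commute (g ^ Q) (h ^ Q)) : IsVirtuallyAbelian G := by
  let N := Subgroup.closure (Set.range fun g : G ↦ g ^ Q)
  have _ : IsMulCommutative N := Subgroup.isMulCommutative_closure (by
    rintro _ ⟨g, rfl⟩ _ ⟨h, rfl⟩
    exact hcomm g h)
  have _ : N.Normal := ⟨fun x hx g ↦ by
    induction hx using Subgroup.closure_induction with
    | mem x hx =>
      obtain ⟨y, rfl⟩ := hx
      exact Subgroup.subset_closure ⟨g * y * g⁻¹, conj_pow⟩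
    | one => simp
    | mul x y _ _ hx hy => simpa only [conj_mul] using mul_mem hx hy
    | inv x _ hx => simpa only [conj_inv] using inv_mem hx⟩
  have hp (g : G) (hg : g ^ p = 1) : g = 1 :=
    htf g (isOfFinOrder_iff_pow_eq_one.2 ⟨p, (Fact.out : p.Prime).pos, hg⟩)
  let H := Subgroup.centralizer (N : Set G)
  refine ⟨H, finiteIndex_centralizer F hσ hp N, ?_⟩
  refine commute_of_pow_mem_center p F (σ := σ.comp H.subtype) (hσ.comp H.subtype_injective)
    (fun h hh ↦ Subtype.ext (htf h (H.subtype.isOfFinOrder hh))) hQ fun h ↦ ?_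
  refine Subgroup.mem_center_iff.2 fun x ↦ Subtype.ext ?_
  exact (Subgroup.mem_centralizer_iff.1 x.2 _ (Subgroup.subset_closure ⟨h, rfl⟩)).symm

end LinearCharacters

section AnisotropicLinearGroup

theorem IsVirtuallyAbelian.of_finiteIndex {G : Type*} [Group G] {H : Subgroup G} [H.FiniteIndex]
    (hH : IsVirtuallyAbelian H) : IsVirtuallyAbelian G := by
  obtain ⟨A, hA, hcomm⟩ := hH
  refine ⟨A.map H.subtype, ⟨?_⟩, ?_⟩
  · rw [Subgroup.index_map_subtype]
    exact mul_ne_zero hA.index_ne_zero Subgroup.FiniteIndex.index_ne_zero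
  · rintro ⟨_, x, hx, rfl⟩ ⟨_, y, hy, rfl⟩
    exact Subtype.ext (congrArg (fun z : A ↦ ((z : H) : G)) (hcomm ⟨x, hx⟩ ⟨y, hy⟩))

theorem IsSemisimpleElt.eq_one_of_pow_ringChar_eq_one {n : ℕ} {K : Type*} [Field K]
    (hK : ringChar K ≠ 0) {g : GL (Fin n) K} (hg : IsSemisimpleElt g)
    (h : g ^ ringChar K = 1) : g = 1 := by
  have _ : Fact (ringChar K).Prime :=
    ⟨(CharP.char_is_prime_or_zero K (ringChar K)).resolve_right hK⟩
  rcases isEmpty_or_nonempty (Fin n) with _ | _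
  · exact Units.ext (Subsingleton.elim _ _)
  let f : Module.End K (Fin n → K) := Matrix.toLinAlgEquiv' g.val
  have hnil : IsNilpotent (f - 1) := by
    refine ⟨ringChar K, ?_⟩
    have _ : CharP (Module.End K (Fin n → K)) (ringChar K) :=
      charP_of_injective_algebraMap (algebraMap K _).injective _
    rw [sub_pow_char_of_commute _ (Commute.one_right f), ← map_pow, ← Units.val_pow_eq_pow_val,
      h, Units.val_one, map_one, one_pow, sub_self]
  have hss : (f - 1).IsSemisimple := by
    have hf : f.IsSemisimple := hg
    have h := hf.aeval (Polynomial.X - 1 : Polynomial K)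
    rwa [map_sub, Polynomial.aeval_X, map_one] at h
  have hf : f = 1 := sub_eq_zero.1 (Module.End.eq_zero_of_isNilpotent_isSemisimple hnil hss)
  exact Units.ext (Matrix.toLinAlgEquiv'.injective (hf.trans (map_one _).symm))

variable {G n : Type*} [Group G] [Fintype n] [DecidableEq n] {p : ℕ} [Fact p.Prime]
  {l : ℕ} {A : Fin l → Subgroup G} [∀ i, IsMulCommutative (A i)]

theorem isVirtuallyAbelian_of_injective_powerSeries {k : Type*} [Field k] [Finite k] [CharP k p]
    {ρ : G →* GL n (PowerSeries k)} (hρ : Function.Injective ρ) (hp : ∀ g : G, g ^ p = 1 → g = 1)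
    [∀ i, Group.FG (A i)]
    (hA : ∀ x : G, ∃ a : Fin l → G, (∀ i, a i ∈ A i) ∧ x = (List.ofFn a).prod) :
    IsVirtuallyAbelian G := by
  let 𝔪 := IsLocalRing.maximalIdeal (PowerSeries k)
  let F := AlgebraicClosure (FractionRing (PowerSeries k))
  have _ : FaithfulSMul (PowerSeries k) F := .trans (PowerSeries k) (FractionRing (PowerSeries k)) F
  have hF : Function.Injective (algebraMap (PowerSeries k) F) :=
    FaithfulSMul.algebraMap_injective _ _
  have _ : CharP (PowerSeries k) p := charP_of_injective_algebraMap PowerSeries.C_injective p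
  have _ : CharP F p := charP_of_injective_algebraMap hF p
  obtain ⟨B, hB⟩ := congruenceSubgroup.exists_index_pow_le (p := p) ρ
    𝔪.fg_of_isNoetherianRing hA
  let σ : G →* Matrix n n F := (algebraMap (PowerSeries k) F).mapMatrix.toMonoidHom.comp
    ((Units.coeHom _).comp ρ)
  have hσ : Function.Injective σ := (Matrix.map_injective hF).comp (Units.val_injective.comp hρ)
  refine .of_finiteIndex (isVirtuallyAbelian_of_commute_pow F p
    (hσ.comp (congruenceSubgroup ρ 𝔪).subtype_injective) (σ := σ.comp (Subgroup.subtype _))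
    (Q := p ^ Fintype.card n) ?_ (pow_pos (Fact.out : p.Prime).pos _) ?_)
  · exact fun g hg ↦ Subtype.ext (congruenceSubgroup.eq_one_of_isOfFinOrder hρ hp
      (IsLocalRing.jacobson_eq_maximalIdeal ⊥ bot_ne_top).ge g.2
      ((congruenceSubgroup ρ 𝔪).subtype.isOfFinOrder hg))
  · exact fun g h ↦ Subtype.ext (commute_pow_of_index_le hρ hB
      (Nat.lt_pow_self (Fact.out : p.Prime).one_lt).le g.2 h.2)

theorem isVirtuallyAbelian_of_injective_GL {K : Type*} [Field K] [CharP K p] [Group.FG G]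
    {ρ : G →* GL n K} (hρ : Function.Injective ρ) (hp : ∀ g : G, g ^ p = 1 → g = 1)
    (hA : ∀ x : G, ∃ a : Fin l → G, (∀ i, a i ∈ A i) ∧ x = (List.ofFn a).prod) :
    IsVirtuallyAbelian G := by
  let _ : Algebra (ZMod p) K := ZMod.algebra K p
  obtain ⟨R, τ, hR, hτ⟩ := exists_fg_subalgebra_map_eq (ZMod p) ((Units.coeHom _).comp ρ)
  have _ : Algebra.FiniteType (ZMod p) R := R.fg_iff_finiteType.1 hR
  have hτ_inj : Function.Injective τ := fun g h hgh ↦ hρ (Units.ext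
    ((hτ g).symm.trans ((congrArg R.val.mapMatrix hgh).trans (hτ h))))
  have _ : IsNoetherianRing R := Algebra.FiniteType.isNoetherianRing (ZMod p) R
  have hfg (i : Fin l) : Group.FG (A i) := by
    open scoped IsMulCommutative in
    exact fg_of_injective_of_isNoetherian (ZMod p) (R := R) (p := p) (σ := τ.comp (A i).subtype)
      (hτ_inj.comp (A i).subtype_injective) fun a ha ↦ Subtype.ext (hp a (congrArg Subtype.val ha))
  obtain ⟨m, ρ', hρ'⟩ := exists_injective_monoidHom_GL_powerSeries (ZMod p) hτ_inj
  exact isVirtuallyAbelian_of_injective_powerSeries hρ' hp hA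

end AnisotropicLinearGroup

theorem stmt_15_general {K : Type*} [Field K] (hchar : ringChar K ≠ 0) {n : ℕ}
    (Γ : Subgroup (GL (Fin n) K)) (hfg : Group.FG ↥Γ)
    (htf : ∀ g ∈ Γ, g ^ ringChar K = 1 → g = 1)
    (k : ℕ) (A : Fin k → Subgroup (GL (Fin n) K))
    (hle : ∀ i, A i ≤ Γ)
    (hab : ∀ i, ∀ x ∈ A i, ∀ y ∈ A i, x * y = y * x)
    (hprod : ∀ x ∈ Γ, ∃ a : Fin k → GL (Fin n) K,
      (∀ i, a i ∈ A i) ∧ x = (List.ofFn a).prod) :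
    IsVirtuallyAbelian ↥Γ := by
  have _ : Fact (ringChar K).Prime :=
    ⟨(CharP.char_is_prime_or_zero K (ringChar K)).resolve_right hchar⟩
  have _ (i : Fin k) : IsMulCommutative ((A i).subgroupOf Γ) :=
    .of_setLike_mul_comm fun x hx y hy ↦ Subtype.ext (hab i x hx y hy)
  refine isVirtuallyAbelian_of_injective_GL (A := fun i ↦ (A i).subgroupOf Γ) Γ.subtype_injective
    (fun g hg ↦ Subtype.ext (htf g g.2 (congrArg Subtype.val hg))) fun x ↦ ?_
  obtain ⟨a, ha, hx⟩ := hprod x x.2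
  refine ⟨fun i ↦ ⟨a i, hle i (ha i)⟩, ha, Γ.subtype_injective ?_⟩
  rw [map_list_prod, List.map_ofFn]
  exact hx

/-- A finitely generated anisotropic linear group over a field of positive characteristic that
is a product of finitely many abelian subgroups is virtually abelian. -/
theorem stmt_15 {K : Type*} [Field K] (hchar : ringChar K ≠ 0) {n : ℕ} (hn : 1 ≤ n)
    (Γ : Subgroup (GL (Fin n) K)) (hfg : Group.FG ↥Γ)
    (hani : ∀ g ∈ Γ, IsSemisimpleElt g)
    (k : ℕ) (A : Fin k → Subgroup (GL (Fin n) K))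
    (hle : ∀ i, A i ≤ Γ)
    (hab : ∀ i, ∀ x ∈ A i, ∀ y ∈ A i, x * y = y * x)
    (hprod : ∀ x ∈ Γ, ∃ a : Fin k → GL (Fin n) K,
      (∀ i, a i ∈ A i) ∧ x = (List.ofFn a).prod) :
    IsVirtuallyAbelian ↥Γ :=
  stmt_15_general hchar Γ hfg
    (fun g hg ↦ (hani g hg).eq_one_of_pow_ringChar_eq_one hchar) k A hle hab hprod
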